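/- Let n ≥ 2 and let f₁, f₂ ∈ Q₀ⁿ. Assume that for every unit vector θ ∈ ℝⁿ one has ‖P_{θ⊥} f₁‖_{L¹(θ⊥)} ≤ ‖P_{θ⊥} f₂‖_{L¹(θ⊥)}. Then ‖f₁‖_{n/(n−1)} ≤ 8·e·√n · ‖f₂‖_{n/(n−1)}. -/

import Mathlib

open MeasureTheory

noncomputable section

/-- `ℝⁿ` with its Euclidean structure. -/
abbrev Eucl (n : ℕ) := EuclideanSpace ℝ (Fin n)

/-- `f : ℝⁿ → [0,∞)` is log-concave:
`f(tx+(1−t)y) ≥ f(x)^t · f(y)^(1−t)` for all `x, y` and `t ∈ (0,1)`. -/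
def IsLogConcave {n : ℕ} (f : Eucl n → ℝ) : Prop :=
  ∀ x y : Eucl n, ∀ t : ℝ, 0 < t → t < 1 →
    f x ^ t * f y ^ (1 - t) ≤ f (t • x + (1 - t) • y)

/-- The class `Q₀ⁿ`: nonnegative, log-concave, upper semicontinuous, integrable
functions with positive integral. -/
def MemQ0 {n : ℕ} (f : Eucl n → ℝ) : Prop :=
  (∀ x, 0 ≤ f x) ∧ IsLogConcave f ∧ UpperSemicontinuous f ∧
    Integrable f ∧ 0 < ∫ x, f x

/-- `‖f‖_∞ = sup f`. -/
def supNorm {n : ℕ} (f : Eucl n → ℝ) : ℝ := ⨆ x, f x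

/-- `‖f‖_p = (∫ f^p)^(1/p)`. -/
def lpNorm {n : ℕ} (p : ℝ) (f : Eucl n → ℝ) : ℝ := (∫ x, f x ^ p) ^ (1 / p)

/-- `‖P_H f‖_{L¹(H)} = ∫_H sup_{z ∈ H⊥} f(y+z) dλ_H(y)`, the `L¹(H)`-norm of the
projection of `f` onto the subspace `H` (with the Lebesgue measure on `H` induced
by the Euclidean structure). -/
def projL1 {n : ℕ} (f : Eucl n → ℝ) (H : Submodule ℝ (Eucl n)) : ℝ :=
  ∫ y : H, ⨆ z : Hᗮ, f ((y : Eucl n) + (z : Eucl n))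

/-- `‖S_H f‖_{L¹(H)} = ∫_H f dλ_H`, the integral of the section `f|_H`. -/
def sectL1 {n : ℕ} (f : Eucl n → ℝ) (H : Submodule ℝ (Eucl n)) : ℝ :=
  ∫ y : H, f (y : Eucl n)

/-!
Write `P_u f` for the supremum of `f` along lines parallel to `u`. For a basis `u₁, …, uₙ` of `ℝⁿ`
the Loomis–Whitney inequality in the coordinates of this basis gives
`(∫ f₁ ^ (n / (n - 1))) ^ (n - 1) * |det u| ≤ ∏ ‖uᵢ‖ * ‖P_{uᵢ} f₁‖₁`.

For `f₂` the inequality can be reversed, at the cost of a constant, along a well-chosen basis. Put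
`F = f₂ ^ (n / (n - 1))` and `r = 1 - 1 / n`, and let `o` be a point. If `w` maximises `F` on a line
parallel to `uᵢ`, log-concavity bounds `F` from below on the segment from `r * w + (1 - r) * o` to
`r * w + (1 - r) * (o + uᵢ)`. Integrating over all such lines gives
`‖uᵢ‖ * ‖P_{uᵢ} f₂‖₁ * (F o * F (o + uᵢ)) ^ (1 / (2 * n)) ≤ n * e * ∫ F`.

The product of these bounds has the right order as soon as `|det u|` is comparable to
`∫ F / (F o * F (o + uᵢ)) ^ (1 / 2)`. To achieve this, let `F o` be nearly maximal, let `K` be a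
compact part of the superlevel set `{F ≥ t}` whose `t ^ (1 / 2) * vol {F ≥ t}` is nearly maximal,
and choose `o + uᵢ` in `K` such that `det u ^ 2` is at least its average. By Andréief's identity
this average is, up to normalisation, `n!` times the determinant of the second moment matrix of
`K - o`, which Jensen's inequality bounds below in terms of `vol K` by comparison with a Gaussian.
Stirling's formula then yields the constant `8 * e * √n`.
-/

open scoped ENNReal

section LoomisWhitney

variable {ι : Type*} [Fintype ι] [DecidableEq ι] {X : ι → Type*} [∀ i, MeasurableSpace (X i)]
  (μ : ∀ i, Measure (X i))

theorem lintegral_prod_rpow_update_le (hι : 2 ≤ Fintype.card ι)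
    {h : ι → (∀ i, X i) → ℝ≥0∞} (hm : ∀ i, Measurable (h i)) (j : ι)
    (hj : ∀ x t, h j (Function.update x j t) = h j x) (x : ∀ i, X i) :
    ∫⁻ t, ∏ i, h i (Function.update x j t) ^ (1 / ((Fintype.card ι : ℝ) - 1)) ∂μ j ≤
      h j x ^ (1 / ((Fintype.card ι : ℝ) - 1)) * ∏ i ∈ Finset.univ.erase j,
        (∫⁻ t, h i (Function.update x j t) ∂μ j) ^ (1 / ((Fintype.card ι : ℝ) - 1)) := by
  have hcard : (0 : ℝ) < (Fintype.card ι : ℝ) - 1 := by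
    have : (2 : ℝ) ≤ Fintype.card ι := mod_cast hι
    linarith
  have hm' : ∀ i, Measurable fun t => h i (Function.update x j t) :=
    fun i => (hm i).comp (measurable_update x)
  simp_rw [← Finset.mul_prod_erase Finset.univ _ (Finset.mem_univ j), hj]
  rw [lintegral_const_mul _ (Finset.measurable_prod _ fun i _ => (hm' i).pow_const _)]
  gcongr
  refine ENNReal.lintegral_prod_norm_pow_le _ (fun i _ => (hm' i).aemeasurable) ?_
    fun _ _ => one_div_nonneg.2 hcard.le
  rw [Finset.sum_const, Finset.card_erase_of_mem (Finset.mem_univ j), Finset.card_univ,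
    nsmul_eq_mul, Nat.cast_pred (by omega), mul_one_div_cancel hcard.ne']

variable [∀ i, SigmaFinite (μ i)]

theorem lmarginal_prod_rpow_le (hι : 2 ≤ Fintype.card ι)
    {g : ι → (∀ i, X i) → ℝ≥0∞} (hg : ∀ i, Measurable (g i))
    (hinv : ∀ i x t, g i (Function.update x i t) = g i x) (s : Finset ι) (x : ∀ i, X i) :
    lmarginal μ s (fun y => ∏ i, g i y ^ (1 / ((Fintype.card ι : ℝ) - 1))) x ≤
      ∏ i, lmarginal μ (s.erase i) (g i) x ^ (1 / ((Fintype.card ι : ℝ) - 1)) := by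
  have hmeas : Measurable fun y => ∏ i, g i y ^ (1 / ((Fintype.card ι : ℝ) - 1)) :=
    Finset.measurable_prod _ fun i _ => (hg i).pow_const _
  induction s using Finset.induction generalizing x with
  | empty => simp
  | insert j s hj ih =>
    have hconst : ∀ x t, lmarginal μ (s.erase j) (g j) (Function.update x j t) =
        lmarginal μ (s.erase j) (g j) x := fun x t => by
      rw [lmarginal_update_of_notMem (hg j) (Finset.notMem_erase j s)]
      exact congrArg (lmarginal μ (s.erase j) · x) (funext fun y => hinv j y t)
    rw [lmarginal_insert _ hmeas hj]
    calc
      _ ≤ ∫⁻ t, ∏ i, lmarginal μ (s.erase i) (g i) (Function.update x j t) ^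
            (1 / ((Fintype.card ι : ℝ) - 1)) ∂μ j := lintegral_mono fun t => ih _
      _ ≤ _ := lintegral_prod_rpow_update_le μ hι (fun i => (hg i).lmarginal μ) j hconst x
      _ = _ := by
        rw [← Finset.mul_prod_erase Finset.univ _ (Finset.mem_univ j), Finset.erase_insert hj,
          Finset.erase_eq_of_notMem hj]
        congr 1
        refine Finset.prod_congr rfl fun i hi => ?_
        have hji : j ≠ i := (Finset.ne_of_mem_erase hi).symm
        rw [Finset.erase_insert_of_ne hji,
          lmarginal_insert _ (hg i) fun hmem => hj (Finset.mem_of_mem_erase hmem)]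

end LoomisWhitney

theorem lintegral_comp_smul_add {V : Type*} [NormedAddCommGroup V] [NormedSpace ℝ V]
    [FiniteDimensional ℝ V] [MeasurableSpace V] [BorelSpace V] (μ : Measure V) [μ.IsAddHaarMeasure]
    {φ : V → ℝ≥0∞} (hφ : Measurable φ) {r : ℝ} (hr : r ≠ 0) (v : V) :
    ∫⁻ x, φ (r • x + v) ∂μ =
      ENNReal.ofReal |(r ^ Module.finrank ℝ V)⁻¹| * ∫⁻ x, φ x ∂μ := by
  have hφv : Measurable fun x => φ (x + v) := by fun_prop
  rw [← lintegral_map (f := fun x => φ (x + v)) hφv (measurable_const_smul r),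
    Measure.map_addHaar_smul _ hr, lintegral_smul_measure, smul_eq_mul,
    lintegral_add_right_eq_self]

section LineSup

theorem isClosed_setOf_exists_mem_le {X T α : Type*} [TopologicalSpace X] [TopologicalSpace T]
    [LinearOrder α] {g : X × T → α} (hg : UpperSemicontinuous g) {K : Set T} (hK : IsCompact K)
    (a : α) : IsClosed {x | ∃ t ∈ K, a ≤ g (x, t)} := by
  have := isCompact_iff_compactSpace.1 hK
  have hC : IsClosed ((fun p : X × K => (p.1, (p.2 : T))) ⁻¹' (g ⁻¹' Set.Ici a)) :=
    (hg.isClosed_preimage a).preimage (by fun_prop)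
  convert isClosedMap_fst_of_compactSpace _ hC using 1
  ext x
  simp

theorem measurable_iSup_of_upperSemicontinuous {X T α : Type*} [TopologicalSpace X]
    [MeasurableSpace X] [OpensMeasurableSpace X] [TopologicalSpace T] [SigmaCompactSpace T]
    [CompleteLinearOrder α] [DenselyOrdered α] [TopologicalSpace α] [OrderTopology α]
    [SecondCountableTopology α] [MeasurableSpace α] [BorelSpace α]
    {g : X × T → α} (hg : UpperSemicontinuous g) : Measurable fun x => ⨆ t, g (x, t) := by
  obtain ⟨D, hDc, hDd⟩ := TopologicalSpace.exists_countable_dense α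
  refine measurable_of_Ioi fun a => ?_
  have hunion : (fun x => ⨆ t, g (x, t)) ⁻¹' Set.Ioi a =
      ⋃ q ∈ D ∩ Set.Ioi a, ⋃ k, {x | ∃ t ∈ compactCovering T k, q ≤ g (x, t)} := by
    ext x
    simp only [Set.mem_preimage, Set.mem_Ioi, lt_iSup_iff, Set.mem_iUnion, Set.mem_ofPred_eq,
      Set.mem_inter_iff, exists_prop]
    constructor
    · rintro ⟨t, ht⟩
      obtain ⟨q, hqD, haq, hqt⟩ := hDd.exists_between ht
      obtain ⟨k, hk⟩ := exists_mem_compactCovering t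
      exact ⟨q, ⟨hqD, haq⟩, k, t, hk, hqt.le⟩
    · rintro ⟨q, ⟨-, haq⟩, -, t, -, hqt⟩
      exact ⟨t, lt_of_lt_of_le haq hqt⟩
  rw [hunion]
  exact .biUnion (hDc.mono Set.inter_subset_left) fun q _ => .iUnion fun k =>
    (isClosed_setOf_exists_mem_le hg (isCompact_compactCovering T k) q).measurableSet

/-- The supremum of `f` over the line `x + ℝ u`, that is, the projection `P_{u⊥} f` viewed as a
`u`-invariant function on the whole space. -/
def lineSup {V : Type*} [AddCommGroup V] [Module ℝ V] (f : V → ℝ≥0∞) (u x : V) : ℝ≥0∞ :=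
  ⨆ s : ℝ, f (x + s • u)

section Module

variable {V : Type*} [AddCommGroup V] [Module ℝ V] (f : V → ℝ≥0∞) (u x : V)

theorem le_lineSup : f x ≤ lineSup f u x := by
  refine le_of_eq_of_le ?_ (le_iSup (fun s : ℝ => f (x + s • u)) 0)
  rw [zero_smul, add_zero]

theorem lineSup_add_smul (t : ℝ) : lineSup f u (x + t • u) = lineSup f u x := by
  simp only [lineSup, add_assoc, ← add_smul]
  exact (Equiv.addLeft t).iSup_comp (g := fun s : ℝ => f (x + s • u))

theorem lineSup_smul {c : ℝ} (hc : c ≠ 0) : lineSup f (c • u) x = lineSup f u x := by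
  simp only [lineSup, smul_smul]
  exact (Equiv.mulRight₀ c hc).iSup_comp (g := fun s : ℝ => f (x + s • u))

end Module

theorem measurable_lineSup {V : Type*} [AddCommGroup V] [Module ℝ V] [TopologicalSpace V]
    [ContinuousAdd V] [ContinuousSMul ℝ V] [MeasurableSpace V] [OpensMeasurableSpace V]
    {f : V → ℝ≥0∞} (hf : UpperSemicontinuous f) (u : V) : Measurable (lineSup f u) :=
  measurable_iSup_of_upperSemicontinuous (g := fun p : V × ℝ => f (p.1 + p.2 • u))
    (hf.comp (by fun_prop))

/-- The integral `‖P_{u⊥} f‖_{L¹(u⊥)}` of the projection of `f` along `u`. -/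
def projLIntegral {V : Type*} [NormedAddCommGroup V] [InnerProductSpace ℝ V]
    [FiniteDimensional ℝ V] [MeasurableSpace V] [BorelSpace V] (f : V → ℝ≥0∞) (u : V) : ℝ≥0∞ :=
  ∫⁻ y : (ℝ ∙ u)ᗮ, lineSup f u y

variable {V : Type*} [NormedAddCommGroup V] [InnerProductSpace ℝ V] [FiniteDimensional ℝ V]
  [MeasurableSpace V] [BorelSpace V]

theorem lintegral_orthogonal_span_smul {c : ℝ} (hc : c ≠ 0) (u : V) (φ : V → ℝ≥0∞) :
    ∫⁻ y : (ℝ ∙ (c • u))ᗮ, φ y = ∫⁻ y : (ℝ ∙ u)ᗮ, φ y := by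
  have hcongr : ∀ W : Submodule ℝ V, W = ℝ ∙ u → ∫⁻ y : Wᗮ, φ y = ∫⁻ y : (ℝ ∙ u)ᗮ, φ y := by
    rintro _ rfl
    rfl
  exact hcongr _ (Submodule.span_singleton_smul_eq (IsUnit.mk0 c hc) u)

theorem projLIntegral_smul (f : V → ℝ≥0∞) {c : ℝ} (hc : c ≠ 0) (u : V) :
    projLIntegral f (c • u) = projLIntegral f u := by
  simp only [projLIntegral, lineSup_smul f u _ hc, lintegral_orthogonal_span_smul hc]

theorem projLIntegral_le_of_forall_norm_eq_one
    {f₁ f₂ : V → ℝ≥0∞} (h : ∀ θ : V, ‖θ‖ = 1 → projLIntegral f₁ θ ≤ projLIntegral f₂ θ)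
    {u : V} (hu : u ≠ 0) : projLIntegral f₁ u ≤ projLIntegral f₂ u := by
  have hu' : ‖u‖⁻¹ ≠ 0 := inv_ne_zero (norm_ne_zero_iff.2 hu)
  simpa only [projLIntegral_smul _ hu'] using h (‖u‖⁻¹ • u) (norm_smul_inv_norm (𝕜 := ℝ) hu)

theorem lintegral_eq_lintegral_orthogonal_of_norm_eq_one {θ : V} (hθ : ‖θ‖ = 1)
    {φ : V → ℝ≥0∞} (hφ : Measurable φ) :
    ∫⁻ x, φ x = ∫⁻ y : (ℝ ∙ θ)ᗮ, ∫⁻ s : ℝ, φ (y + s • θ) := by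
  have hsum : MeasurePreserving fun p : (ℝ ∙ θ) × (ℝ ∙ θ)ᗮ => (p.1 : V) + p.2 := by
    convert (ℝ ∙ θ).orthogonalDecomposition.symm.measurePreserving.comp
      (WithLp.volume_preserving_toLp (ℝ ∙ θ) (ℝ ∙ θ)ᗮ) using 1
    ext p
    simp
  have hline := (LinearIsometryEquiv.toSpanUnitSingleton (𝕜 := ℝ) θ hθ).measurePreserving
  have hφ' : Measurable fun p : (ℝ ∙ θ) × (ℝ ∙ θ)ᗮ => φ (p.1 + p.2) := hφ.comp hsum.measurable
  rw [← hsum.lintegral_comp hφ, Measure.volume_eq_prod, lintegral_prod_symm _ hφ'.aemeasurable]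
  refine lintegral_congr fun y => ?_
  have hφy : Measurable fun z : ℝ ∙ θ => φ (z + y) := by fun_prop
  rw [← hline.lintegral_comp hφy]
  simp [add_comm]

theorem lintegral_eq_enorm_mul_lintegral_orthogonal {u : V} (hu : u ≠ 0)
    {φ : V → ℝ≥0∞} (hφ : Measurable φ) :
    ∫⁻ x, φ x = ‖u‖ₑ * ∫⁻ y : (ℝ ∙ u)ᗮ, ∫⁻ s : ℝ, φ (y + s • u) := by
  have hu' : ‖u‖ ≠ 0 := norm_ne_zero_iff.2 hu
  have hscale (y : V) : ∫⁻ s : ℝ, φ (y + s • ‖u‖⁻¹ • u) = ‖u‖ₑ * ∫⁻ s : ℝ, φ (y + s • u) := by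
    have h := lintegral_comp_smul_add volume (φ := fun s : ℝ => φ (y + s • u)) (by fun_prop)
      (inv_ne_zero hu') 0
    rw [Module.finrank_self, pow_one, inv_inv, abs_norm, ofReal_norm] at h
    simpa only [smul_smul, smul_eq_mul, add_zero, mul_comm] using h
  have hθ : ‖‖u‖⁻¹ • u‖ = 1 := norm_smul_inv_norm (𝕜 := ℝ) hu
  rw [lintegral_eq_lintegral_orthogonal_of_norm_eq_one hθ hφ]
  rw [lintegral_orthogonal_span_smul (inv_ne_zero hu') u
    fun y => ∫⁻ s : ℝ, φ (y + s • ‖u‖⁻¹ • u)]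
  simp only [hscale]
  exact lintegral_const_mul _ (by fun_prop)

theorem exists_ne_zero_ne_zero_of_lintegral_ne_zero
    {f : V → ℝ≥0∞} (hm : Measurable f) (h0 : ∫⁻ x, f x ≠ 0) {u : V} (hu : u ≠ 0) :
    ∃ (o : V) (c : ℝ), c ≠ 0 ∧ f o ≠ 0 ∧ f (o + c • u) ≠ 0 := by
  by_contra! h
  refine h0 ?_
  rw [lintegral_eq_enorm_mul_lintegral_orthogonal hu hm]
  suffices hline : ∀ y : V, ∫⁻ s : ℝ, f (y + s • u) = 0 by simp [hline]
  intro y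
  have hsub : (Function.support fun s : ℝ => f (y + s • u)).Subsingleton := by
    intro a ha b hb
    by_contra hab
    refine hb ?_
    simpa [← add_smul, add_assoc] using h (y + a • u) (b - a) (sub_ne_zero.2 (Ne.symm hab)) ha
  rw [lintegral_eq_zero_iff (by fun_prop)]
  exact hsub.measure_zero volume

end LineSup

section AffineLoomisWhitney

variable {ι : Type*} [Fintype ι]

/-- The square matrix whose rows are the vectors `u i`. -/
def rowMatrix (u : ι → EuclideanSpace ℝ ι) : Matrix ι ι ℝ := .of fun i j => u i j

theorem toLp_vecMul_rowMatrix (u : ι → EuclideanSpace ℝ ι) (t : ι → ℝ) :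
    WithLp.toLp 2 (Matrix.vecMul t (rowMatrix u)) = ∑ i, t i • u i := by
  ext j
  simp [rowMatrix, Matrix.vecMul, dotProduct]

variable [DecidableEq ι]

theorem ne_zero_of_det_rowMatrix_ne_zero {u : ι → EuclideanSpace ℝ ι}
    (hu : (rowMatrix u).det ≠ 0) (i : ι) : u i ≠ 0 := fun h =>
  hu (Matrix.det_eq_zero_of_row_eq_zero i fun j => by simp [rowMatrix, h])

theorem lintegral_eq_abs_det_mul {u : ι → EuclideanSpace ℝ ι} (hu : (rowMatrix u).det ≠ 0)
    {φ : EuclideanSpace ℝ ι → ℝ≥0∞} (hφ : Measurable φ) :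
    ∫⁻ x, φ x = ENNReal.ofReal |(rowMatrix u).det| * ∫⁻ t : ι → ℝ, φ (∑ i, t i • u i) := by
  have hdet : (rowMatrix u).transpose.det ≠ 0 := by rwa [Matrix.det_transpose]
  have hpi := PiLp.volume_preserving_toLp ι
  have hmap := Real.map_matrix_volume_pi_eq_smul_volume_pi hdet
  have hlin : Measurable (Matrix.toLin' (rowMatrix u).transpose) :=
    (LinearMap.continuous_of_finiteDimensional _).measurable
  have hcomb (t : ι → ℝ) : ∑ i, t i • u i =
      WithLp.toLp 2 (Matrix.toLin' (rowMatrix u).transpose t) := by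
    rw [← toLp_vecMul_rowMatrix, Matrix.toLin'_apply, Matrix.mulVec_transpose]
  simp_rw [hcomb]
  rw [← lintegral_map (f := fun t => φ (WithLp.toLp 2 t)) (hφ.comp hpi.measurable) hlin, hmap,
    lintegral_smul_measure, hpi.lintegral_comp hφ, smul_eq_mul, ← mul_assoc,
    ← ENNReal.ofReal_mul (abs_nonneg _), Matrix.det_transpose, ← abs_mul, mul_inv_cancel₀ hu,
    abs_one, ENNReal.ofReal_one, one_mul]

theorem sum_update_smul {V : Type*} [AddCommGroup V] [Module ℝ V] (u : ι → V) (t : ι → ℝ) (i : ι)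
    (s : ℝ) : ∑ j, Function.update t i s j • u j = ∑ j, t j • u j + (s - t i) • u i := by
  have hupdate : Function.update t i s = t + Pi.single i (s - t i) := by
    ext j
    obtain rfl | hj := eq_or_ne j i <;> simp [*]
  simp [hupdate, add_smul, Finset.sum_add_distrib, Pi.single_apply, ite_smul]

theorem exists_lintegral_add_smul_eq_one {V : Type*} [NormedAddCommGroup V]
    [InnerProductSpace ℝ V] [MeasurableSpace V] [BorelSpace V] {u : V} (hu : u ≠ 0) :
    ∃ ω : V → ℝ≥0∞, Measurable ω ∧ ∀ x, ∫⁻ s : ℝ, ω (x + s • u) = 1 := by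
  set ψ : ℝ → ℝ≥0∞ := (Set.Ico 0 1).indicator 1 with hψ
  have hψm : Measurable ψ := measurable_one.indicator measurableSet_Ico
  refine ⟨fun x => ψ (inner ℝ u x / ‖u‖ ^ 2), by fun_prop, fun x => ?_⟩
  have hshift (s : ℝ) : inner ℝ u (x + s • u) / ‖u‖ ^ 2 = inner ℝ u x / ‖u‖ ^ 2 + s := by
    rw [inner_add_right, inner_smul_right, real_inner_self_eq_norm_sq, add_div,
      mul_div_cancel_right₀ _ (by simpa using hu)]
  simp_rw [hshift]
  rw [lintegral_add_left_eq_self, hψ, lintegral_indicator_one measurableSet_Ico]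
  simp

-- Both sides integrate `h * ω`, where the weight `ω` has integral one on every line along `u i`.
theorem enorm_mul_lintegral_orthogonal_eq {u : ι → EuclideanSpace ℝ ι}
    (hu : (rowMatrix u).det ≠ 0) (i : ι) {h : EuclideanSpace ℝ ι → ℝ≥0∞} (hm : Measurable h)
    (hinv : ∀ x (s : ℝ), h (x + s • u i) = h x) :
    ‖u i‖ₑ * ∫⁻ y : (ℝ ∙ u i)ᗮ, h y = ENNReal.ofReal |(rowMatrix u).det| *
      lmarginal (fun _ => volume) (Finset.univ.erase i)
        (fun t : ι → ℝ => h (∑ j, t j • u j)) 0 := by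
  have hui := ne_zero_of_det_rowMatrix_ne_zero hu i
  obtain ⟨ω, hω, hω1⟩ := exists_lintegral_add_smul_eq_one hui
  have hline (x : EuclideanSpace ℝ ι) : ∫⁻ s : ℝ, h (x + s • u i) * ω (x + s • u i) = h x := by
    simp_rw [hinv]
    rw [lintegral_const_mul _ (by fun_prop), hω1, mul_one]
  have hcomb : Measurable fun t : ι → ℝ => h (∑ j, t j • u j) * ω (∑ j, t j • u j) := by fun_prop
  have hcoord (t : ι → ℝ) : ∫⁻ s, h (∑ j, Function.update t i s j • u j) *
      ω (∑ j, Function.update t i s j • u j) = h (∑ j, t j • u j) := by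
    simp_rw [sum_update_smul]
    rw [lintegral_sub_right_eq_self fun s : ℝ =>
      h (∑ j, t j • u j + s • u i) * ω (∑ j, t j • u j + s • u i)]
    exact hline _
  calc
    _ = ∫⁻ x, h x * ω x := by
      rw [lintegral_eq_enorm_mul_lintegral_orthogonal hui (by fun_prop)]
      simp_rw [hline]
    _ = ENNReal.ofReal |(rowMatrix u).det| *
        lmarginal (fun _ => volume) Finset.univ
          (fun t : ι → ℝ => h (∑ j, t j • u j) * ω (∑ j, t j • u j)) 0 := by
      rw [lintegral_eq_abs_det_mul hu (by fun_prop), lmarginal_univ]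
      rfl
    _ = _ := by
      rw [lmarginal_erase' _ hcomb (Finset.mem_univ i)]
      simp_rw [hcoord]

theorem lintegral_rpow_le_abs_det_mul_prod (hι : 2 ≤ Fintype.card ι)
    {f : EuclideanSpace ℝ ι → ℝ≥0∞} (hf : UpperSemicontinuous f)
    {u : ι → EuclideanSpace ℝ ι} (hu : (rowMatrix u).det ≠ 0) :
    ∫⁻ x, f x ^ ((Fintype.card ι : ℝ) / ((Fintype.card ι : ℝ) - 1)) ≤
      ENNReal.ofReal |(rowMatrix u).det| * ∏ i,
        lmarginal (fun _ => volume) (Finset.univ.erase i)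
          (fun t : ι → ℝ => lineSup f (u i) (∑ j, t j • u j)) 0 ^
            (1 / ((Fintype.card ι : ℝ) - 1)) := by
  have hcard : 0 ≤ 1 / ((Fintype.card ι : ℝ) - 1) := by
    have : (2 : ℝ) ≤ Fintype.card ι := mod_cast hι
    exact one_div_nonneg.2 (by linarith)
  have hpow (a : ℝ≥0∞) : a ^ ((Fintype.card ι : ℝ) / ((Fintype.card ι : ℝ) - 1)) =
      ∏ _i : ι, a ^ (1 / ((Fintype.card ι : ℝ) - 1)) := by
    rw [Finset.prod_const, Finset.card_univ, ← ENNReal.rpow_mul_natCast, one_div_mul_eq_div]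
  have hlw := lmarginal_prod_rpow_le (fun _ => volume) hι
    (g := fun i (t : ι → ℝ) => lineSup f (u i) (∑ j, t j • u j))
    (fun i => (measurable_lineSup hf (u i)).comp (by fun_prop))
    (fun i t s => by simp only [sum_update_smul, lineSup_add_smul]) Finset.univ 0
  rw [lmarginal_univ] at hlw
  rw [lintegral_eq_abs_det_mul hu (hf.measurable.pow_const _)]
  gcongr
  refine (lintegral_mono fun t => ?_).trans hlw
  rw [hpow]
  exact Finset.prod_le_prod' fun i _ => ENNReal.rpow_le_rpow (le_lineSup _ _ _) hcard

theorem lintegral_rpow_pow_mul_abs_det_le (hι : 2 ≤ Fintype.card ι)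
    {f : EuclideanSpace ℝ ι → ℝ≥0∞} (hf : UpperSemicontinuous f)
    {u : ι → EuclideanSpace ℝ ι} (hu : (rowMatrix u).det ≠ 0) :
    (∫⁻ x, f x ^ ((Fintype.card ι : ℝ) / ((Fintype.card ι : ℝ) - 1))) ^ (Fintype.card ι - 1) *
      ENNReal.ofReal |(rowMatrix u).det| ≤ ∏ i, ‖u i‖ₑ * projLIntegral f (u i) := by
  set d := ENNReal.ofReal |(rowMatrix u).det|
  set m : ι → ℝ≥0∞ := fun i => lmarginal (fun _ => volume) (Finset.univ.erase i)
    (fun t : ι → ℝ => lineSup f (u i) (∑ j, t j • u j)) 0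
  have hroot (i : ι) : (m i ^ (1 / ((Fintype.card ι : ℝ) - 1))) ^ (Fintype.card ι - 1) = m i := by
    rw [← ENNReal.rpow_mul_natCast, ← Nat.cast_pred (by omega), one_div_mul_cancel,
      ENNReal.rpow_one]
    exact Nat.cast_ne_zero.2 (by omega)
  calc
    _ ≤ (d * ∏ i, m i ^ (1 / ((Fintype.card ι : ℝ) - 1))) ^ (Fintype.card ι - 1) * d := by
      gcongr
      exact lintegral_rpow_le_abs_det_mul_prod hι hf hu
    _ = d ^ Fintype.card ι * ∏ i, m i := by
      rw [mul_pow, ← Finset.prod_pow, mul_right_comm, ← pow_succ,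
        Nat.sub_add_cancel (by omega)]
      simp_rw [hroot]
    _ = ∏ i, ‖u i‖ₑ * projLIntegral f (u i) := by
      simp_rw [projLIntegral, enorm_mul_lintegral_orthogonal_eq hu _ (measurable_lineSup hf _)
        (lineSup_add_smul f _)]
      rw [Finset.prod_mul_distrib, Finset.prod_const, Finset.card_univ]

end AffineLoomisWhitney

section LogConcave

theorem lintegral_rpow_eq_zero_iff {X : Type*} [MeasurableSpace X] {μ : Measure X} {f : X → ℝ≥0∞}
    (hm : Measurable f) {p : ℝ} (hp : 0 < p) : ∫⁻ x, f x ^ p ∂μ = 0 ↔ ∫⁻ x, f x ∂μ = 0 := by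
  simp only [lintegral_eq_zero_iff hm, lintegral_eq_zero_iff (hm.pow_const p),
    Filter.EventuallyEq, Pi.zero_apply, ENNReal.rpow_eq_zero_iff_of_pos hp]

/-- Log-concavity of a function with values in `[0, ∞]`; the counterpart of `IsLogConcave` for
which integrals and suprema need no finiteness assumptions. -/
def ELogConcave {V : Type*} [AddCommGroup V] [Module ℝ V] (f : V → ℝ≥0∞) : Prop :=
  ∀ x y : V, ∀ t : ℝ, 0 < t → t < 1 → f x ^ t * f y ^ (1 - t) ≤ f (t • x + (1 - t) • y)

namespace ELogConcave

section Module

variable {V : Type*} [AddCommGroup V] [Module ℝ V] {f : V → ℝ≥0∞}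

theorem rpow (hf : ELogConcave f) {p : ℝ} (hp : 0 ≤ p) : ELogConcave fun x => f x ^ p := by
  intro x y t ht0 ht1
  calc
    (f x ^ p) ^ t * (f y ^ p) ^ (1 - t) = (f x ^ t * f y ^ (1 - t)) ^ p := by
      rw [ENNReal.mul_rpow_of_nonneg _ _ hp]
      simp only [← ENNReal.rpow_mul, mul_comm]
    _ ≤ f (t • x + (1 - t) • y) ^ p := ENNReal.rpow_le_rpow (hf x y t ht0 ht1) hp

theorem comp_add_smul (hf : ELogConcave f) (z u : V) :
    ELogConcave fun s : ℝ => f (z + s • u) := by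
  intro a b t ht0 ht1
  convert hf (z + a • u) (z + b • u) t ht0 ht1 using 2
  simp only [smul_eq_mul]
  module

end Module

theorem mul_le_mul_one_sub {g : ℝ → ℝ≥0∞} (hg : ELogConcave g) {τ : ℝ} (hτ0 : 0 < τ)
    (hτ1 : τ < 1) : g 0 * g 1 ≤ g τ * g (1 - τ) := by
  have hleft := hg 1 0 τ hτ0 hτ1
  have hright := hg 1 0 (1 - τ) (by linarith) (by linarith)
  simp only [smul_eq_mul, mul_one, mul_zero, add_zero, sub_sub_cancel] at hleft hright
  have hsplit (a : ℝ≥0∞) : a ^ τ * a ^ (1 - τ) = a := by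
    rw [← ENNReal.rpow_add_of_nonneg _ _ hτ0.le (by linarith), add_sub_cancel, ENNReal.rpow_one]
  calc
    g 0 * g 1 = (g 0 ^ τ * g 0 ^ (1 - τ)) * (g 1 ^ τ * g 1 ^ (1 - τ)) := by simp only [hsplit]
    _ = (g 1 ^ τ * g 0 ^ (1 - τ)) * (g 1 ^ (1 - τ) * g 0 ^ τ) := by ring
    _ ≤ g τ * g (1 - τ) := mul_le_mul' hleft hright

-- Pair `τ` with `1 - τ` and apply Cauchy–Schwarz.
theorem sqrt_mul_le_setLIntegral {g : ℝ → ℝ≥0∞} (hg : ELogConcave g) (hm : Measurable g) :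
    (g 0 * g 1) ^ (1 / 2 : ℝ) ≤ ∫⁻ τ in Set.Ioo (0 : ℝ) 1, g τ := by
  have hreflect : ∫⁻ τ in Set.Ioo (0 : ℝ) 1, g (1 - τ) = ∫⁻ τ in Set.Ioo (0 : ℝ) 1, g τ := by
    have h := lintegral_sub_left_eq_self (μ := volume) ((Set.Ioo (0 : ℝ) 1).indicator g) 1
    simp only [← lintegral_indicator measurableSet_Ioo] at h ⊢
    rw [← h]
    congr! 2 with τ
    simp [Set.indicator, and_comm]
  calc
    (g 0 * g 1) ^ (1 / 2 : ℝ) = ∫⁻ _τ in Set.Ioo (0 : ℝ) 1, (g 0 * g 1) ^ (1 / 2 : ℝ) := by simp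
    _ ≤ ∫⁻ τ in Set.Ioo (0 : ℝ) 1, g τ ^ (1 / 2 : ℝ) * g (1 - τ) ^ (1 / 2 : ℝ) := by
      refine setLIntegral_mono' measurableSet_Ioo fun τ hτ => ?_
      rw [← ENNReal.mul_rpow_of_nonneg _ _ (by norm_num)]
      exact ENNReal.rpow_le_rpow (hg.mul_le_mul_one_sub hτ.1 hτ.2) (by norm_num)
    _ ≤ (∫⁻ τ in Set.Ioo (0 : ℝ) 1, g τ) ^ (1 / 2 : ℝ) *
        (∫⁻ τ in Set.Ioo (0 : ℝ) 1, g (1 - τ)) ^ (1 / 2 : ℝ) :=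
      ENNReal.lintegral_mul_norm_pow_le hm.aemeasurable (by fun_prop) (by norm_num) (by norm_num)
        (by norm_num)
    _ = ∫⁻ τ in Set.Ioo (0 : ℝ) 1, g τ := by
      rw [hreflect, ← ENNReal.rpow_add_of_nonneg _ _ (by norm_num) (by norm_num)]
      norm_num

section NormedSpace

variable {V : Type*} [NormedAddCommGroup V] [NormedSpace ℝ V] [MeasurableSpace V] [BorelSpace V]
  {f : V → ℝ≥0∞}

theorem lineSup_rpow_mul_le (hf : ELogConcave f) (hm : Measurable f) {r : ℝ} (hr0 : 0 < r)
    (hr1 : r < 1) (u o x : V) :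
    lineSup (fun y => f y ^ r) u x * (f o * f (o + u)) ^ ((1 - r) / 2) ≤
      ENNReal.ofReal (r / (1 - r)) * ∫⁻ s : ℝ, f (r • (x + s • u) + (1 - r) • o) := by
  rw [lineSup, ENNReal.iSup_mul]
  refine iSup_le fun s => ?_
  set w := x + s • u with hw
  set g : ℝ → ℝ≥0∞ := fun τ => f (r • w + (1 - r) • o + τ • (1 - r) • u) with hg
  have hgm : Measurable g := by fun_prop
  have hg0 : f w ^ r * f o ^ (1 - r) ≤ g 0 := by
    simpa only [hg, zero_smul, add_zero] using hf w o r hr0 hr1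
  have hg1 : f w ^ r * f (o + u) ^ (1 - r) ≤ g 1 := by
    simpa only [hg, one_smul, smul_add, add_assoc] using hf w (o + u) r hr0 hr1
  have hr : 0 < 1 - r := by linarith
  calc
    f w ^ r * (f o * f (o + u)) ^ ((1 - r) / 2) =
        ((f w ^ r * f o ^ (1 - r)) * (f w ^ r * f (o + u) ^ (1 - r))) ^ (1 / 2 : ℝ) := by
      rw [mul_mul_mul_comm, ← ENNReal.mul_rpow_of_nonneg _ _ hr.le,
        ENNReal.mul_rpow_of_nonneg (_ * _) _ one_half_pos.le,
        ← ENNReal.rpow_mul (f o * f (o + u)), mul_one_div,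
        ENNReal.mul_rpow_of_nonneg (f w ^ r) _ one_half_pos.le,
        ← ENNReal.rpow_add_of_nonneg _ _ (by norm_num) (by norm_num), add_halves,
        ENNReal.rpow_one]
    _ ≤ (g 0 * g 1) ^ (1 / 2 : ℝ) := by gcongr
    _ ≤ ∫⁻ τ, g τ :=
      ((hf.comp_add_smul _ _).sqrt_mul_le_setLIntegral hgm).trans (setLIntegral_le_lintegral _ _)
    _ = ENNReal.ofReal (r / (1 - r)) * ∫⁻ σ : ℝ, f (r • (x + σ • u) + (1 - r) • o) := by
      have hφ : Measurable fun σ : ℝ => f (r • (x + σ • u) + (1 - r) • o) := by fun_prop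
      have h := lintegral_comp_smul_add volume hφ (div_pos hr hr0).ne' s
      rw [Module.finrank_self, pow_one, inv_div, abs_of_pos (div_pos hr0 hr)] at h
      rw [← h]
      refine lintegral_congr fun τ => congrArg f ?_
      simp only [hw, smul_eq_mul]
      match_scalars <;> field_simp
      ring

theorem exists_le_of_lintegral_ne_top [FiniteDimensional ℝ V] {μ : Measure V} [μ.IsAddHaarMeasure]
    (hf : ELogConcave f) (hm : Measurable f)
    (h0 : ∫⁻ x, f x ∂μ ≠ 0) (htop : ∫⁻ x, f x ∂μ ≠ ⊤) : ∃ B ≠ ⊤, ∀ x, f x ≤ B := by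
  set I := ∫⁻ x, f x ^ (1 / 2 : ℝ) ∂μ with hI
  set J := ENNReal.ofReal |((1 / 2 : ℝ) ^ Module.finrank ℝ V)⁻¹| * ∫⁻ x, f x ∂μ with hJ
  have hI0 : I ≠ 0 := mt (lintegral_rpow_eq_zero_iff hm one_half_pos).1 h0
  have hJtop : J ≠ ⊤ := ENNReal.mul_ne_top ENNReal.ofReal_ne_top htop
  have hmid (o : V) : I * f o ^ (1 / 2 : ℝ) ≤ J := by
    rw [hI, ← lintegral_mul_const _ (hm.pow_const _), hJ,
      ← lintegral_comp_smul_add μ hm (by norm_num) ((1 / 2 : ℝ) • o)]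
    refine lintegral_mono fun x => ?_
    simpa only [sub_half] using hf x o (1 / 2) (by norm_num) (by norm_num)
  refine ⟨(J / I) ^ (2 : ℝ), ENNReal.rpow_ne_top_of_nonneg (by norm_num)
    (ENNReal.div_ne_top hJtop hI0), fun o => ?_⟩
  calc
    f o = (f o ^ (1 / 2 : ℝ)) ^ (2 : ℝ) := by rw [← ENNReal.rpow_mul]; norm_num
    _ ≤ (J / I) ^ (2 : ℝ) := by
      gcongr
      rw [ENNReal.le_div_iff_mul_le (.inl hI0) (.inr hJtop), mul_comm]
      exact hmid o

theorem lintegral_rpow_ne_top [FiniteDimensional ℝ V] {μ : Measure V} [μ.IsAddHaarMeasure]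
    (hf : ELogConcave f) (hm : Measurable f) (h0 : ∫⁻ x, f x ∂μ ≠ 0)
    (htop : ∫⁻ x, f x ∂μ ≠ ⊤) {p : ℝ} (hp : 1 ≤ p) : ∫⁻ x, f x ^ p ∂μ ≠ ⊤ := by
  obtain ⟨B, hB, hfB⟩ := hf.exists_le_of_lintegral_ne_top hm h0 htop
  have hp' : 0 ≤ p - 1 := sub_nonneg.2 hp
  refine ne_top_of_le_ne_top
    (ENNReal.mul_ne_top (ENNReal.rpow_ne_top_of_nonneg hp' hB) htop) ?_
  rw [← lintegral_const_mul _ hm]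
  refine lintegral_mono fun x => ?_
  calc
    f x ^ p = f x ^ (p - 1) * f x := by
      nth_rw 3 [← ENNReal.rpow_one (f x)]
      rw [← ENNReal.rpow_add_of_nonneg _ _ hp' zero_le_one, sub_add_cancel]
    _ ≤ _ := by
      gcongr
      exact hfB x

end NormedSpace

variable {V : Type*} [NormedAddCommGroup V] [InnerProductSpace ℝ V] [FiniteDimensional ℝ V]
  [MeasurableSpace V] [BorelSpace V] {f : V → ℝ≥0∞}

theorem enorm_mul_projLIntegral_rpow_mul_le (hf : ELogConcave f) (hm : Measurable f) {r : ℝ}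
    (hr0 : 0 < r) (hr1 : r < 1) {u : V} (hu : u ≠ 0) (o : V) :
    ‖u‖ₑ * projLIntegral (fun y => f y ^ r) u * (f o * f (o + u)) ^ ((1 - r) / 2) ≤
      ENNReal.ofReal (r / (1 - r) * (r ^ Module.finrank ℝ V)⁻¹) * ∫⁻ x, f x := by
  set A := (f o * f (o + u)) ^ ((1 - r) / 2)
  have hr : 0 ≤ r / (1 - r) := div_nonneg hr0.le (by linarith)
  have hφ : Measurable fun x => f (r • x + (1 - r) • o) := by fun_prop
  calc
    _ ≤ ‖u‖ₑ * ∫⁻ y : (ℝ ∙ u)ᗮ, lineSup (fun y => f y ^ r) u y * A := by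
      rw [mul_assoc]
      gcongr
      exact lintegral_mul_const_le _ _
    _ ≤ ‖u‖ₑ * ∫⁻ y : (ℝ ∙ u)ᗮ, ENNReal.ofReal (r / (1 - r)) *
        ∫⁻ s : ℝ, f (r • ((y : V) + s • u) + (1 - r) • o) :=
      mul_le_mul_right (lintegral_mono fun y : (ℝ ∙ u)ᗮ =>
        hf.lineSup_rpow_mul_le hm hr0 hr1 u o (y : V)) _
    _ = ENNReal.ofReal (r / (1 - r)) * ∫⁻ x, f (r • x + (1 - r) • o) := by
      rw [lintegral_const_mul' _ _ ENNReal.ofReal_ne_top, mul_left_comm,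
        lintegral_eq_enorm_mul_lintegral_orthogonal hu hφ]
    _ = _ := by
      rw [lintegral_comp_smul_add volume hm hr0.ne', ← mul_assoc, ← ENNReal.ofReal_mul hr,
        abs_of_pos (by positivity)]

theorem projLIntegral_ne_top (hf : ELogConcave f) (hm : Measurable f) (h0 : ∫⁻ x, f x ≠ 0)
    (htop : ∫⁻ x, f x ≠ ⊤) {u : V} (hu : u ≠ 0) : projLIntegral f u ≠ ⊤ := by
  obtain ⟨o, c, hc, ho, hou⟩ := exists_ne_zero_ne_zero_of_lintegral_ne_zero hm h0 hu
  have hcu : c • u ≠ 0 := smul_ne_zero hc hu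
  have hroot : (fun x => (f x ^ (2 : ℝ)) ^ (1 / 2 : ℝ)) = f := by
    funext x
    rw [← ENNReal.rpow_mul]
    norm_num
  have hsq : ∫⁻ x, f x ^ (2 : ℝ) ≠ ⊤ := hf.lintegral_rpow_ne_top hm h0 htop one_le_two
  have hbound := (hf.rpow zero_le_two).enorm_mul_projLIntegral_rpow_mul_le
    (hm.pow_const (2 : ℝ)) one_half_pos one_half_lt_one hcu o
  rw [hroot, projLIntegral_smul f hc] at hbound
  intro htop'
  refine ne_top_of_le_ne_top (ENNReal.mul_ne_top ENNReal.ofReal_ne_top hsq) hbound ?_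
  rw [htop', ENNReal.mul_top (enorm_ne_zero.2 hcu), ENNReal.top_mul]
  rw [Ne, ENNReal.rpow_eq_zero_iff_of_pos (by norm_num)]
  simp [ho, hou]

end ELogConcave

end LogConcave

section SuperlevelSets

variable {X : Type*} [MeasurableSpace X] {μ : Measure X} {g : X → ℝ≥0∞}

theorem lintegral_sq_eq_lintegral_measure_le_mul (hg : Measurable g) (hfin : ∀ x, g x ≠ ⊤) :
    ∫⁻ x, g x ^ 2 ∂μ =
      2 * ∫⁻ t in Set.Ioi (0 : ℝ), μ {x | ENNReal.ofReal t ≤ g x} * ENNReal.ofReal t := by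
  have h := lintegral_rpow_eq_lintegral_meas_le_mul μ (f := fun x => (g x).toReal)
    (ae_of_all _ fun x => ENNReal.toReal_nonneg) hg.ennreal_toReal.aemeasurable two_pos
  simp_rw [Real.rpow_two, ENNReal.ofReal_pow ENNReal.toReal_nonneg,
    ENNReal.ofReal_toReal (hfin _), ENNReal.ofReal_ofNat,
    ← ENNReal.ofReal_le_iff_le_toReal (hfin _)] at h
  simpa [show (2 : ℝ) - 1 = 1 by norm_num] using h

theorem lintegral_sq_le_two_mul (hg : Measurable g) {B M : ℝ≥0∞} (hB : B ≠ ⊤) (hgB : ∀ x, g x ≤ B)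
    (hM : ∀ t : ℝ, 0 < t → μ {x | ENNReal.ofReal t ≤ g x} * ENNReal.ofReal t ≤ M) :
    ∫⁻ x, g x ^ 2 ∂μ ≤ 2 * (M * B) := by
  rw [lintegral_sq_eq_lintegral_measure_le_mul hg fun x => ne_top_of_le_ne_top hB (hgB x)]
  gcongr
  calc
    _ ≤ ∫⁻ t in Set.Ioi (0 : ℝ), (Set.Iic B.toReal).indicator (fun _ => M) t := by
      refine setLIntegral_mono' measurableSet_Ioi fun t ht => ?_
      by_cases htB : t ≤ B.toReal
      · rw [Set.indicator_of_mem (Set.mem_Iic.2 htB)]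
        exact hM t ht
      · have hempty : {x | ENNReal.ofReal t ≤ g x} = ∅ := by
          refine Set.eq_empty_of_forall_notMem fun x hx => htB ?_
          exact (ENNReal.ofReal_le_iff_le_toReal hB).1 (le_trans hx (hgB x))
        simp [hempty]
    _ = M * B := by
      rw [lintegral_indicator_const measurableSet_Iic, Measure.restrict_apply measurableSet_Iic,
        Set.Iic_inter_Ioi, Real.volume_Ioc, sub_zero, ENNReal.ofReal_toReal hB]

theorem exists_isCompact_mul_lintegral_sq_lt [TopologicalSpace X] [μ.InnerRegular]
    (hg : Measurable g) {B : ℝ≥0∞} (hB : B ≠ ⊤) (hgB : ∀ x, g x ≤ B)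
    (h0 : ∫⁻ x, g x ^ 2 ∂μ ≠ 0) (htop : ∫⁻ x, g x ^ 2 ∂μ ≠ ⊤) {c : ℝ≥0∞} (hc : 2 * c < 1) :
    ∃ (o : X) (t : ℝ≥0∞) (K : Set X), IsCompact K ∧ (∀ x ∈ K, t ≤ g x) ∧
      c * ∫⁻ x, g x ^ 2 ∂μ < μ K * (g o * t) := by
  by_contra! hcon
  set Z := ∫⁻ x, g x ^ 2 ∂μ
  set M := ⨆ t : ℝ, μ {x | ENNReal.ofReal t ≤ g x} * ENNReal.ofReal t with hM
  have hMsup : M * ⨆ x, g x ≤ c * Z := by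
    rw [hM, ENNReal.iSup_mul]
    refine iSup_le fun t => ?_
    have hlevel : MeasurableSet {x | ENNReal.ofReal t ≤ g x} :=
      measurableSet_le measurable_const hg
    rw [hlevel.measure_eq_iSup_isCompact, mul_assoc]
    simp only [ENNReal.mul_iSup, ENNReal.iSup_mul, iSup_le_iff]
    intro o K hK hKc
    rw [mul_comm (ENNReal.ofReal t)]
    exact hcon o (ENNReal.ofReal t) K hKc fun x hx => hK hx
  have hZle : Z ≤ 2 * (c * Z) :=
    (lintegral_sq_le_two_mul hg (ne_top_of_le_ne_top hB (iSup_le hgB)) (le_iSup g) fun t _ =>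
      le_iSup (fun t : ℝ => μ {x | ENNReal.ofReal t ≤ g x} * ENNReal.ofReal t) t).trans
      (mul_le_mul_right hMsup 2)
  rw [← mul_assoc] at hZle
  exact (((ENNReal.mul_lt_mul_left h0 htop hc).trans_eq (one_mul Z)).trans_le hZle).false

end SuperlevelSets

section Andreief

variable {X ι 𝕜 : Type*} [MeasurableSpace X] {μ : Measure X} [SigmaFinite μ] [Fintype ι]
  [DecidableEq ι] [RCLike 𝕜] {φ ψ : ι → X → 𝕜}

theorem det_mul_det_eq_sum_sum (A B : Matrix ι ι 𝕜) :
    A.det * B.det = ∑ σ : Equiv.Perm ι, ∑ τ : Equiv.Perm ι,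
      ((Equiv.Perm.sign σ : ℤ) : 𝕜) * ((Equiv.Perm.sign τ : ℤ) : 𝕜) *
        ∏ i, A i (σ i) * B i (τ i) := by
  rw [← A.det_transpose, ← B.det_transpose, Matrix.det_apply', Matrix.det_apply',
    Finset.sum_mul_sum]
  simp only [Matrix.transpose_apply, Finset.prod_mul_distrib]
  exact Finset.sum_congr rfl fun σ _ => Finset.sum_congr rfl fun τ _ => by ring

theorem integrable_sign_mul_prod (h : ∀ a b, Integrable (fun x => φ a x * ψ b x) μ)
    (σ τ : Equiv.Perm ι) :
    Integrable (fun x : ι → X => ((Equiv.Perm.sign σ : ℤ) : 𝕜) * ((Equiv.Perm.sign τ : ℤ) : 𝕜) *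
      ∏ i, φ (σ i) (x i) * ψ (τ i) (x i)) (Measure.pi fun _ => μ) :=
  (Integrable.fintype_prod (f := fun i x => φ (σ i) x * ψ (τ i) x) fun i =>
    h (σ i) (τ i)).const_mul _

/-- **Andréief's identity**. -/
theorem integral_det_mul_det (h : ∀ a b, Integrable (fun x => φ a x * ψ b x) μ) :
    ∫ x : ι → X, (Matrix.of fun i a => φ a (x i)).det * (Matrix.of fun i b => ψ b (x i)).det
        ∂(Measure.pi fun _ => μ) =
      (Fintype.card ι).factorial * (Matrix.of fun a b => ∫ x, φ a x * ψ b x ∂μ).det := by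
  set M : Matrix ι ι 𝕜 := Matrix.of fun a b => ∫ x, φ a x * ψ b x ∂μ
  have hterm (σ τ : Equiv.Perm ι) :
      ∫ x : ι → X, ((Equiv.Perm.sign σ : ℤ) : 𝕜) * ((Equiv.Perm.sign τ : ℤ) : 𝕜) *
        ∏ i, φ (σ i) (x i) * ψ (τ i) (x i) ∂(Measure.pi fun _ => μ) =
      ((Equiv.Perm.sign σ : ℤ) : 𝕜) * (((Equiv.Perm.sign τ : ℤ) : 𝕜) * ∏ i, M (σ i) (τ i)) := by
    rw [integral_const_mul, mul_assoc]
    congr 2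
    exact integral_fintype_prod_eq_prod fun i x => φ (σ i) x * ψ (τ i) x
  have hrow (σ : Equiv.Perm ι) :
      ∑ τ : Equiv.Perm ι, ((Equiv.Perm.sign τ : ℤ) : 𝕜) * ∏ i, M (σ i) (τ i) =
        ((Equiv.Perm.sign σ : ℤ) : 𝕜) * M.det := by
    rw [← Matrix.det_permute, ← Matrix.det_transpose, Matrix.det_apply']
    rfl
  simp_rw [det_mul_det_eq_sum_sum, Matrix.of_apply]
  rw [integral_finsetSum _ fun σ _ => integrable_finsetSum _ fun τ _ =>
    integrable_sign_mul_prod h σ τ]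
  simp_rw [integral_finsetSum _ fun τ _ => integrable_sign_mul_prod h _ τ, hterm,
    ← Finset.mul_sum, hrow, ← mul_assoc, ← Int.cast_mul, ← Units.val_mul, Int.units_mul_self]
  simp [Fintype.card_perm]

end Andreief

section GaussianComparison

variable {E : Type*} [NormedAddCommGroup E] [InnerProductSpace ℝ E] [FiniteDimensional ℝ E]
  [MeasurableSpace E] [BorelSpace E]

theorem integral_exp_neg_mul_norm_sq_linearMap {A : E →ₗ[ℝ] E} (hA : A.det ≠ 0) {b : ℝ}
    (hb : 0 < b) :
    ∫ x, Real.exp (-b * ‖A x‖ ^ 2) =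
      |A.det|⁻¹ * (Real.pi / b) ^ (Module.finrank ℝ E / 2 : ℝ) := by
  have hAm : Measurable A := A.continuous_of_finiteDimensional.measurable
  have hmap := Measure.map_linearMap_addHaar_eq_smul_addHaar volume hA
  rw [← GaussianFourier.integral_rexp_neg_mul_sq_norm hb,
    ← integral_map (f := fun y => Real.exp (-b * ‖y‖ ^ 2)) hAm.aemeasurable (by fun_prop), hmap,
    integral_smul_measure, ENNReal.toReal_ofReal (abs_nonneg _), abs_inv, smul_eq_mul]

theorem integrable_exp_neg_mul_norm_sq_linearMap {A : E →ₗ[ℝ] E} (hA : A.det ≠ 0) {b : ℝ}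
    (hb : 0 < b) : Integrable fun x => Real.exp (-b * ‖A x‖ ^ 2) := by
  refine .of_integral_ne_zero ?_
  rw [integral_exp_neg_mul_norm_sq_linearMap hA hb]
  positivity

theorem measureReal_mul_exp_neg_mul_setAverage_le {K : Set E} (hK : IsCompact K)
    (hK0 : volume K ≠ 0) {A : E →ₗ[ℝ] E} (hA : A.det ≠ 0) {b : ℝ} (hb : 0 < b) :
    volume.real K * Real.exp (-b * ⨍ x in K, ‖A x‖ ^ 2) ≤
      |A.det|⁻¹ * (Real.pi / b) ^ (Module.finrank ℝ E / 2 : ℝ) := by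
  have hAc : Continuous A := A.continuous_of_finiteDimensional
  have hfin : volume K ≠ ⊤ := hK.measure_lt_top.ne
  have hint : IntegrableOn (fun x => -b * ‖A x‖ ^ 2) K :=
    (Continuous.continuousOn (by fun_prop)).integrableOn_compact hK
  have hexp := integrable_exp_neg_mul_norm_sq_linearMap hA hb
  have jensen := convexOn_exp.map_set_average_le Real.continuous_exp.continuousOn isClosed_univ hK0
    hfin (ae_of_all _ fun _ => Set.mem_univ _) hint hexp.integrableOn
  have hlin : ⨍ x in K, -b * ‖A x‖ ^ 2 = -b * ⨍ x in K, ‖A x‖ ^ 2 := by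
    rw [setAverage_eq, setAverage_eq, integral_const_mul, smul_eq_mul, smul_eq_mul, mul_left_comm]
  calc
    _ ≤ volume.real K * ⨍ x in K, Real.exp (-b * ‖A x‖ ^ 2) := by
      rw [← hlin]
      gcongr
    _ = ∫ x in K, Real.exp (-b * ‖A x‖ ^ 2) := measure_smul_setAverage _ hfin
    _ ≤ ∫ x, Real.exp (-b * ‖A x‖ ^ 2) :=
      setIntegral_le_integral hexp (ae_of_all _ fun _ => (Real.exp_pos _).le)
    _ = _ := integral_exp_neg_mul_norm_sq_linearMap hA hb

end GaussianComparison

section SecondMoment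

open scoped Matrix

variable {ι : Type*} [Fintype ι] {K : Set (EuclideanSpace ℝ ι)}

/-- The second moment matrix `∫ x in K, x xᵀ`, not normalised by the volume of `K`. -/
def secondMoment (K : Set (EuclideanSpace ℝ ι)) : Matrix ι ι ℝ :=
  .of fun a b => ∫ x in K, x a * x b

theorem integrableOn_coord_mul_coord (hK : IsCompact K) (a b : ι) :
    IntegrableOn (fun x : EuclideanSpace ℝ ι => x a * x b) K :=
  (Continuous.continuousOn (by fun_prop)).integrableOn_compact hK

theorem dotProduct_secondMoment_mulVec (hK : IsCompact K) (v : ι → ℝ) :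
    v ⬝ᵥ secondMoment K *ᵥ v = ∫ x in K, (v ⬝ᵥ x.ofLp) ^ 2 := by
  have hexpand (x : EuclideanSpace ℝ ι) :
      (v ⬝ᵥ x.ofLp) ^ 2 = ∑ a, ∑ b, v a * v b * (x a * x b) := by
    rw [sq, dotProduct, Finset.sum_mul_sum]
    exact Finset.sum_congr rfl fun a _ => Finset.sum_congr rfl fun b _ => by ring
  have hint (a b : ι) := (integrableOn_coord_mul_coord hK a b).const_mul (v a * v b)
  simp_rw [hexpand]
  rw [integral_finsetSum _ fun a _ => integrable_finsetSum _ fun b _ => hint a b]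
  simp_rw [integral_finsetSum _ fun b _ => hint _ b, integral_const_mul, dotProduct,
    Matrix.mulVec, dotProduct, Finset.mul_sum, secondMoment, Matrix.of_apply]
  exact Finset.sum_congr rfl fun a _ => Finset.sum_congr rfl fun b _ => by ring

theorem setIntegral_norm_sq_toEuclideanLin (hK : IsCompact K) [DecidableEq ι] (A : Matrix ι ι ℝ) :
    ∫ x in K, ‖A.toEuclideanLin x‖ ^ 2 = (A * secondMoment K * Aᵀ).trace := by
  have hcont (a : ι) : IntegrableOn (fun x : EuclideanSpace ℝ ι => (A a ⬝ᵥ x.ofLp) ^ 2) K :=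
    (Continuous.continuousOn (by fun_prop)).integrableOn_compact hK
  have hnorm (x : EuclideanSpace ℝ ι) : ‖A.toEuclideanLin x‖ ^ 2 = ∑ a, (A a ⬝ᵥ x.ofLp) ^ 2 := by
    simp [EuclideanSpace.norm_sq_eq, Matrix.mulVec]
  simp_rw [hnorm]
  rw [integral_finsetSum _ fun a _ => hcont a, Matrix.trace]
  refine Finset.sum_congr rfl fun a _ => ?_
  rw [← dotProduct_secondMoment_mulVec hK, Matrix.diag_apply, Matrix.dotProduct_mulVec]
  rfl

theorem volume_ker_dotProduct {v : ι → ℝ} (hv : v ≠ 0) :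
    volume {x : EuclideanSpace ℝ ι | v ⬝ᵥ x.ofLp = 0} = 0 := by
  set L := innerₛₗ ℝ (WithLp.toLp 2 v) with hL
  have hset : {x : EuclideanSpace ℝ ι | v ⬝ᵥ x.ofLp = 0} = LinearMap.ker L := by
    ext x
    simp [hL, EuclideanSpace.inner_eq_star_dotProduct, dotProduct_comm]
  rw [hset]
  refine Measure.addHaar_submodule _ _ fun htop => hv ?_
  rw [LinearMap.ker_eq_top] at htop
  simpa [hL] using LinearMap.congr_fun htop (WithLp.toLp 2 v)

theorem posDef_secondMoment (hK : IsCompact K) (hK0 : volume K ≠ 0) : (secondMoment K).PosDef := by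
  refine .of_dotProduct_mulVec_pos ?_ fun v hv => ?_
  · ext a b
    simp [secondMoment, mul_comm]
  rw [star_trivial, dotProduct_secondMoment_mulVec hK]
  have hint : IntegrableOn (fun x : EuclideanSpace ℝ ι => (v ⬝ᵥ x.ofLp) ^ 2) K :=
    (Continuous.continuousOn (by fun_prop)).integrableOn_compact hK
  rw [setIntegral_pos_iff_support_of_nonneg_ae (ae_of_all _ fun x => sq_nonneg _) hint]
  have hsupp : Function.support (fun x : EuclideanSpace ℝ ι => (v ⬝ᵥ x.ofLp) ^ 2) =
      {x | v ⬝ᵥ x.ofLp = 0}ᶜ := by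
    ext x
    simp
  rw [hsupp, ← Set.sdiff_eq_compl_inter, measure_sdiff_null (volume_ker_dotProduct hv)]
  exact pos_iff_ne_zero.2 hK0

open scoped ComplexOrder MatrixOrder Matrix.Norms.L2Operator in
theorem exists_mul_mul_conjTranspose_eq_one {𝕜 : Type*} [RCLike 𝕜] [DecidableEq ι]
    {M : Matrix ι ι 𝕜} (hM : M.PosDef) : ∃ A : Matrix ι ι 𝕜, A * M * Aᴴ = 1 := by
  obtain ⟨C, hC, rfl⟩ :=
    CStarAlgebra.isStrictlyPositive_iff_eq_mul_star_self.1 hM.isStrictlyPositive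
  lift C to (Matrix ι ι 𝕜)ˣ using hC
  refine ⟨↑C⁻¹, ?_⟩
  rw [← mul_assoc, Units.inv_mul, one_mul, Matrix.star_eq_conjTranspose,
    ← Matrix.conjTranspose_mul, Units.inv_mul, Matrix.conjTranspose_one]

-- `A` puts `K` in isotropic position.
theorem exists_linearMap_setAverage_norm_sq_eq [DecidableEq ι] (hK : IsCompact K)
    (hK0 : volume K ≠ 0) :
    ∃ A : EuclideanSpace ℝ ι →ₗ[ℝ] EuclideanSpace ℝ ι, A.det ^ 2 * (secondMoment K).det = 1 ∧
      ⨍ x in K, ‖A x‖ ^ 2 = Fintype.card ι / volume.real K := by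
  obtain ⟨A, hA⟩ := exists_mul_mul_conjTranspose_eq_one (posDef_secondMoment hK hK0)
  rw [Matrix.conjTranspose_eq_transpose_of_trivial] at hA
  refine ⟨A.toEuclideanLin, ?_, ?_⟩
  · have hdet := congrArg Matrix.det hA
    rw [Matrix.det_mul, Matrix.det_mul, Matrix.det_transpose, Matrix.det_one] at hdet
    rw [LinearMap.det_toLpLin]
    linarith
  · rw [setAverage_eq, setIntegral_norm_sq_toEuclideanLin hK, hA, Matrix.trace_one, smul_eq_mul,
      inv_mul_eq_div]

theorem measureReal_pow_le_mul_det_secondMoment [DecidableEq ι] (hK : IsCompact K)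
    (hK0 : volume K ≠ 0) :
    volume.real K ^ (Fintype.card ι + 2) ≤
      (2 * Real.pi * Real.exp 1) ^ Fintype.card ι * (secondMoment K).det := by
  set n := Fintype.card ι
  set V := volume.real K
  have hV : 0 < V := ENNReal.toReal_pos hK0 hK.measure_lt_top.ne
  obtain ⟨A, hdet, havg⟩ := exists_linearMap_setAverage_norm_sq_eq hK hK0
  have hA0 : A.det ≠ 0 := fun h => by simp [h] at hdet
  have hM : (secondMoment K).det = (|A.det|⁻¹) ^ 2 := by
    rw [inv_pow, sq_abs]
    exact eq_inv_of_mul_eq_one_right hdet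
  have h := measureReal_mul_exp_neg_mul_setAverage_le hK hK0 hA0 (half_pos hV)
  rw [havg, finrank_euclideanSpace, Real.rpow_div_two_eq_sqrt _ (by positivity),
    Real.rpow_natCast] at h
  have hsq : (V * Real.exp (-(V / 2) * (n / V))) ^ 2 = V ^ 2 * (Real.exp 1 ^ n)⁻¹ := by
    rw [mul_pow, ← Real.exp_nat_mul, ← Real.exp_nat_mul, ← Real.exp_neg]
    congr 2
    field_simp
    simp
  have hpow := pow_le_pow_left₀ (by positivity) h 2
  rw [hsq, mul_pow, ← hM, pow_right_comm, Real.sq_sqrt (by positivity)] at hpow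
  calc
    V ^ (n + 2) = V ^ 2 * (Real.exp 1 ^ n)⁻¹ * (Real.exp 1 * V) ^ n := by
      field_simp
      ring
    _ ≤ (secondMoment K).det * (Real.pi / (V / 2)) ^ n * (Real.exp 1 * V) ^ n := by gcongr
    _ = (Real.pi / (V / 2) * (Real.exp 1 * V)) ^ n * (secondMoment K).det := by
      rw [mul_pow]
      ring
    _ = _ := by
      congr 2
      field_simp

end SecondMoment

section RandomDeterminant

variable {ι : Type*} [Fintype ι] [DecidableEq ι] {K : Set (EuclideanSpace ℝ ι)}

theorem integrableOn_det_rowMatrix_sq (hK : IsCompact K) :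
    IntegrableOn (fun x : ι → EuclideanSpace ℝ ι => (rowMatrix x).det ^ 2)
      (Set.univ.pi fun _ => K) := by
  have hcont : Continuous fun x : ι → EuclideanSpace ℝ ι => (rowMatrix x).det ^ 2 :=
    (Continuous.matrix_det (by unfold rowMatrix; fun_prop)).pow 2
  exact hcont.continuousOn.integrableOn_compact (isCompact_univ_pi fun _ => hK)

theorem setIntegral_det_rowMatrix_sq (hK : IsCompact K) :
    ∫ x in Set.univ.pi fun _ : ι => K, (rowMatrix x).det ^ 2 =
      (Fintype.card ι).factorial * (secondMoment K).det := by
  have : IsFiniteMeasure (volume.restrict K) := ⟨by simpa using hK.measure_lt_top⟩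
  have h := integral_det_mul_det (μ := volume.restrict K) (φ := fun a x => x a)
    (ψ := fun b x => x b) (integrableOn_coord_mul_coord hK)
  simp_rw [← sq] at h
  rwa [← Measure.restrict_pi_pi] at h

theorem exists_le_det_rowMatrix_sq (hK : IsCompact K) (hK0 : volume K ≠ 0) :
    ∃ u : ι → EuclideanSpace ℝ ι, (∀ i, u i ∈ K) ∧
      (Fintype.card ι).factorial * volume.real K ^ 2 ≤
        (2 * Real.pi * Real.exp 1) ^ Fintype.card ι * (rowMatrix u).det ^ 2 := by
  set n := Fintype.card ι
  set V := volume.real K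
  have hV : 0 < V := ENNReal.toReal_pos hK0 hK.measure_lt_top.ne
  have hvol : volume (Set.univ.pi fun _ : ι => K) = volume K ^ n := by
    simp [volume_pi, Measure.pi_pi, n]
  obtain ⟨u, hu, havg⟩ := exists_setAverage_le (hvol ▸ pow_ne_zero _ hK0)
    (hvol ▸ ENNReal.pow_ne_top hK.measure_lt_top.ne) (integrableOn_det_rowMatrix_sq hK)
  refine ⟨u, fun i => hu i (Set.mem_univ i), ?_⟩
  rw [setAverage_eq, setIntegral_det_rowMatrix_sq hK, measureReal_def, hvol, ENNReal.toReal_pow,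
    ← measureReal_def, smul_eq_mul, inv_mul_le_iff₀ (by positivity)] at havg
  refine le_of_mul_le_mul_left ?_ (pow_pos hV n)
  calc
    V ^ n * (n.factorial * V ^ 2) = n.factorial * V ^ (n + 2) := by ring
    _ ≤ n.factorial * ((2 * Real.pi * Real.exp 1) ^ n * (secondMoment K).det) := by
      gcongr
      exact measureReal_pow_le_mul_det_secondMoment hK hK0
    _ = (2 * Real.pi * Real.exp 1) ^ n * (n.factorial * (secondMoment K).det) := by ring
    _ ≤ (2 * Real.pi * Real.exp 1) ^ n * (V ^ n * (rowMatrix u).det ^ 2) := by gcongr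
    _ = _ := by ring

theorem exists_le_det_rowMatrix_sub_sq (hK : IsCompact K) (hK0 : volume K ≠ 0)
    (o : EuclideanSpace ℝ ι) :
    ∃ u : ι → EuclideanSpace ℝ ι, (∀ i, o + u i ∈ K) ∧
      (Fintype.card ι).factorial * volume.real K ^ 2 ≤
        (2 * Real.pi * Real.exp 1) ^ Fintype.card ι * (rowMatrix u).det ^ 2 := by
  have hvol : volume ((o + ·) ⁻¹' K) = volume K := measure_preimage_add _ _ _
  have hcomp : IsCompact ((o + ·) ⁻¹' K) := (Homeomorph.addLeft o).isCompact_preimage.2 hK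
  rw [measureReal_def, ← hvol]
  exact exists_le_det_rowMatrix_sq hcomp (hvol ▸ hK0)

end RandomDeterminant

section NumericalBounds

theorem one_add_inv_pow_le_exp_one {m : ℕ} (hm : m ≠ 0) : (1 + (m : ℝ)⁻¹) ^ m ≤ Real.exp 1 :=
  calc
    (1 + (m : ℝ)⁻¹) ^ m ≤ Real.exp (m : ℝ)⁻¹ ^ m := by
      gcongr
      linarith [Real.add_one_le_exp (m : ℝ)⁻¹]
    _ = Real.exp 1 := by rw [← Real.exp_nat_mul, mul_inv_cancel₀ (Nat.cast_ne_zero.2 hm)]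

theorem one_sub_inv_div_mul_inv_pow_le {n : ℕ} (hn : 2 ≤ n) :
    (1 - (n : ℝ)⁻¹) / (1 - (1 - (n : ℝ)⁻¹)) * ((1 - (n : ℝ)⁻¹) ^ n)⁻¹ ≤ n * Real.exp 1 := by
  obtain ⟨m, rfl⟩ := Nat.exists_eq_add_of_le' (one_le_two.trans hn)
  have hm : m ≠ 0 := by omega
  have hr : 1 - ((m + 1 : ℕ) : ℝ)⁻¹ = (1 + (m : ℝ)⁻¹)⁻¹ := by
    push_cast
    field_simp
    ring
  calc
    _ = ((m + 1 : ℕ) : ℝ) * (1 + (m : ℝ)⁻¹) ^ m := by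
      rw [sub_sub_cancel, hr, inv_pow, inv_inv, pow_succ]
      field_simp
    _ ≤ _ := by
      gcongr
      exact one_add_inv_pow_le_exp_one hm

theorem three_mul_div_exp_pow_le_factorial {n : ℕ} (hn : 2 ≤ n) :
    3 * (n / Real.exp 1) ^ n ≤ (n.factorial : ℝ) := by
  have hn' : (2 : ℝ) ≤ n := by exact_mod_cast hn
  have hsqrt : 3 ≤ √(2 * Real.pi * n) := Real.le_sqrt_of_sq_le (by nlinarith [Real.pi_gt_three])
  exact (mul_le_mul_of_nonneg_right hsqrt (by positivity)).trans (Stirling.le_factorial_stirling n)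

theorem two_pi_exp_sq_pow_le {n : ℕ} (hn : 2 ≤ n) :
    (2 * Real.pi * Real.exp 1 ^ 2) ^ n ≤ 64 ^ n * (3 * (9 / 20) ^ 2) := by
  have hbase : 2 * Real.pi * Real.exp 1 ^ 2 ≤ 47 :=
    calc
      _ ≤ 2 * 3.1416 * (2.7182818286 : ℝ) ^ 2 := by
        gcongr
        exacts [Real.pi_lt_d4.le, Real.exp_one_lt_d9.le]
      _ ≤ 47 := by norm_num
  have hratio : ((47 : ℝ) / 64) ^ n ≤ 3 * (9 / 20) ^ 2 :=
    (pow_le_pow_of_le_one (by norm_num) (by norm_num) hn).trans (by norm_num)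
  calc
    _ ≤ (47 : ℝ) ^ n := by gcongr
    _ = 64 ^ n * (47 / 64) ^ n := by rw [← mul_pow, mul_div_cancel₀ _ (by norm_num)]
    _ ≤ _ := by gcongr

theorem two_pi_exp_pow_mul_pow_le {n : ℕ} (hn : 2 ≤ n) :
    (2 * Real.pi * Real.exp 1) ^ n * (n * Real.exp 1) ^ (2 * n) ≤
      (8 * Real.exp 1 * √n) ^ (2 * n) * (n.factorial * (9 / 20) ^ 2) := by
  have hleft : (2 * Real.pi * Real.exp 1) ^ n * (n * Real.exp 1) ^ (2 * n) =
      (2 * Real.pi * Real.exp 1 ^ 2) ^ n *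
        ((n * Real.exp 1 ^ 2) ^ n * (n / Real.exp 1) ^ n) := by
    rw [pow_mul, ← mul_pow, ← mul_pow, ← mul_pow]
    congr 1
    field_simp
  have hright : (8 * Real.exp 1 * √n) ^ (2 * n) = 64 ^ n * (n * Real.exp 1 ^ 2) ^ n := by
    rw [pow_mul, ← mul_pow, mul_pow, Real.sq_sqrt n.cast_nonneg]
    congr 1
    ring
  rw [hleft, hright]
  calc
    _ ≤ 64 ^ n * (3 * (9 / 20) ^ 2) * ((n * Real.exp 1 ^ 2) ^ n * (n / Real.exp 1) ^ n) := by
      gcongr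
      exact two_pi_exp_sq_pow_le hn
    _ = 64 ^ n * (n * Real.exp 1 ^ 2) ^ n * (3 * (n / Real.exp 1) ^ n * (9 / 20) ^ 2) := by ring
    _ ≤ _ := by
      gcongr
      exact three_mul_div_exp_pow_le_factorial hn

theorem ofReal_two_pi_exp_pow_mul_pow_le {n : ℕ} (hn : 2 ≤ n) :
    ENNReal.ofReal ((2 * Real.pi * Real.exp 1) ^ n) *
        ENNReal.ofReal (n * Real.exp 1) ^ (2 * n) ≤
      ENNReal.ofReal (8 * Real.exp 1 * √n) ^ (2 * n) *
        (n.factorial * ENNReal.ofReal (9 / 20) ^ 2) := by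
  simp only [← ENNReal.ofReal_natCast n.factorial]
  rw [← ENNReal.ofReal_pow (by positivity), ← ENNReal.ofReal_pow (by positivity),
    ← ENNReal.ofReal_pow (by positivity), ← ENNReal.ofReal_mul (by positivity),
    ← ENNReal.ofReal_mul (by positivity), ← ENNReal.ofReal_mul (by positivity)]
  exact ENNReal.ofReal_le_ofReal (two_pi_exp_pow_mul_pow_le hn)

end NumericalBounds

section ReverseLoomisWhitney

variable {ι : Type*} [Fintype ι]

theorem ELogConcave.prod_enorm_mul_projLIntegral_rpow_mul_le {F : EuclideanSpace ℝ ι → ℝ≥0∞}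
    (hF : ELogConcave F) (hm : Measurable F) (hι : 2 ≤ Fintype.card ι)
    {u : ι → EuclideanSpace ℝ ι} (hu : ∀ i, u i ≠ 0) {o : EuclideanSpace ℝ ι} {s : ℝ≥0∞}
    (hs : ∀ i, s ^ 2 ≤ F o * F (o + u i)) :
    (∏ i, ‖u i‖ₑ * projLIntegral (fun y => F y ^ (1 - (Fintype.card ι : ℝ)⁻¹)) (u i)) * s ≤
      (ENNReal.ofReal (Fintype.card ι * Real.exp 1) * ∫⁻ x, F x) ^ Fintype.card ι := by
  set n := Fintype.card ι
  have hn : (2 : ℝ) ≤ n := by exact_mod_cast hι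
  have hr0 : 0 < 1 - (n : ℝ)⁻¹ := sub_pos.2 (inv_lt_one_of_one_lt₀ (by linarith))
  have hr1 : 1 - (n : ℝ)⁻¹ < 1 := sub_lt_self 1 (by positivity)
  have hroot (i : ι) : s ^ (n : ℝ)⁻¹ ≤ (F o * F (o + u i)) ^ ((1 - (1 - (n : ℝ)⁻¹)) / 2) :=
    calc
      s ^ (n : ℝ)⁻¹ = (s ^ 2) ^ ((1 - (1 - (n : ℝ)⁻¹)) / 2) := by
        rw [← ENNReal.rpow_natCast_mul]
        congr 1
        push_cast
        ring
      _ ≤ _ := ENNReal.rpow_le_rpow (hs i) (by linarith)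
  have hfactor (i : ι) : ‖u i‖ₑ * projLIntegral (fun y => F y ^ (1 - (n : ℝ)⁻¹)) (u i) *
      s ^ (n : ℝ)⁻¹ ≤ ENNReal.ofReal (n * Real.exp 1) * ∫⁻ x, F x :=
    calc
      _ ≤ _ := mul_le_mul_right (hroot i) _
      _ ≤ _ := hF.enorm_mul_projLIntegral_rpow_mul_le hm hr0 hr1 (hu i) o
      _ ≤ _ := by
        rw [finrank_euclideanSpace]
        exact mul_le_mul_left (ENNReal.ofReal_le_ofReal (one_sub_inv_div_mul_inv_pow_le hι)) _
  have hs_prod : s = ∏ _i : ι, s ^ (n : ℝ)⁻¹ := by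
    rw [Finset.prod_const, Finset.card_univ, ← ENNReal.rpow_mul_natCast,
      inv_mul_cancel₀ (by positivity), ENNReal.rpow_one]
  rw [hs_prod, ← Finset.prod_mul_distrib]
  exact Finset.prod_le_pow_card _ _ _ fun i _ => hfactor i

theorem ELogConcave.exists_isCompact_sq_le_mul {V : Type*} [NormedAddCommGroup V] [NormedSpace ℝ V]
    [FiniteDimensional ℝ V] [MeasurableSpace V] [BorelSpace V] {μ : Measure V} [μ.IsAddHaarMeasure]
    {F : V → ℝ≥0∞} (hF : ELogConcave F) (hm : Measurable F) (h0 : ∫⁻ x, F x ∂μ ≠ 0)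
    (htop : ∫⁻ x, F x ∂μ ≠ ⊤) {c : ℝ≥0∞} (hc : 2 * c < 1) :
    ∃ (o : V) (s : ℝ≥0∞) (K : Set V), IsCompact K ∧ (∀ x ∈ K, s ^ 2 ≤ F o * F x) ∧
      c * ∫⁻ x, F x ∂μ < μ K * s := by
  have hsq (x : V) : (F x ^ (2⁻¹ : ℝ)) ^ 2 = F x := by
    rw [← ENNReal.rpow_mul_natCast]
    norm_num
  obtain ⟨B, hB, hFB⟩ := hF.exists_le_of_lintegral_ne_top hm h0 htop
  have hint : ∫⁻ x, (F x ^ (2⁻¹ : ℝ)) ^ 2 ∂μ = ∫⁻ x, F x ∂μ := lintegral_congr hsq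
  obtain ⟨o, t, K, hK, ht, hlt⟩ := exists_isCompact_mul_lintegral_sq_lt (μ := μ)
    (hm.pow_const (2⁻¹ : ℝ)) (ENNReal.rpow_ne_top_of_nonneg (by positivity) hB)
    (fun x => ENNReal.rpow_le_rpow (hFB x) (by positivity)) (hint ▸ h0) (hint ▸ htop) hc
  refine ⟨o, F o ^ (2⁻¹ : ℝ) * t, K, hK, fun x hx => ?_, hint ▸ hlt⟩
  rw [mul_pow, hsq, ← hsq x]
  gcongr
  exact ht x hx

theorem ELogConcave.exists_mul_lintegral_sq_le_mul_det_sq [DecidableEq ι]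
    {F : EuclideanSpace ℝ ι → ℝ≥0∞} (hF : ELogConcave F) (hm : Measurable F)
    (h0 : ∫⁻ x, F x ≠ 0) (htop : ∫⁻ x, F x ≠ ⊤) {c : ℝ} (hc : 2 * c < 1) :
    ∃ (o : EuclideanSpace ℝ ι) (u : ι → EuclideanSpace ℝ ι) (s : ℝ≥0∞),
      (rowMatrix u).det ≠ 0 ∧ (∀ i, s ^ 2 ≤ F o * F (o + u i)) ∧
      (Fintype.card ι).factorial * (ENNReal.ofReal c * ∫⁻ x, F x) ^ 2 ≤
        ENNReal.ofReal ((2 * Real.pi * Real.exp 1) ^ Fintype.card ι) *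
          ENNReal.ofReal |(rowMatrix u).det| ^ 2 * s ^ 2 := by
  have hc' : 2 * ENNReal.ofReal c < 1 := by
    rwa [← ENNReal.ofReal_ofNat, ← ENNReal.ofReal_mul zero_le_two, ENNReal.ofReal_lt_one]
  obtain ⟨o, s, K, hK, hs, hlt⟩ := hF.exists_isCompact_sq_le_mul hm h0 htop hc'
  have hK0 : volume K ≠ 0 := left_ne_zero_of_mul (ne_zero_of_lt hlt)
  obtain ⟨u, huK, hdet⟩ := exists_le_det_rowMatrix_sub_sq hK hK0 o
  have hV : 0 < volume.real K := ENNReal.toReal_pos hK0 hK.measure_lt_top.ne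
  refine ⟨o, u, s, fun h => ?_, fun i => hs _ (huK i), ?_⟩
  · rw [h, sq (0 : ℝ), mul_zero, mul_zero] at hdet
    exact absurd hdet (not_le.2 (by positivity))
  calc
    _ ≤ ((Fintype.card ι).factorial : ℝ≥0∞) * (volume K * s) ^ 2 := by gcongr
    _ = ENNReal.ofReal ((Fintype.card ι).factorial * volume.real K ^ 2) * s ^ 2 := by
      rw [ENNReal.ofReal_mul (by positivity), ENNReal.ofReal_natCast,
        ENNReal.ofReal_pow measureReal_nonneg, measureReal_def,
        ENNReal.ofReal_toReal hK.measure_lt_top.ne, mul_pow, mul_assoc]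
    _ ≤ _ := by
      rw [← ENNReal.ofReal_pow (abs_nonneg _), sq_abs, ← ENNReal.ofReal_mul (by positivity)]
      gcongr

theorem ELogConcave.exists_prod_enorm_mul_projLIntegral_rpow_le [DecidableEq ι]
    {F : EuclideanSpace ℝ ι → ℝ≥0∞} (hF : ELogConcave F) (hm : Measurable F)
    (hι : 2 ≤ Fintype.card ι) (h0 : ∫⁻ x, F x ≠ 0) (htop : ∫⁻ x, F x ≠ ⊤) :
    ∃ u : ι → EuclideanSpace ℝ ι, (rowMatrix u).det ≠ 0 ∧
      ∏ i, ‖u i‖ₑ * projLIntegral (fun y => F y ^ (1 - (Fintype.card ι : ℝ)⁻¹)) (u i) ≤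
        ENNReal.ofReal |(rowMatrix u).det| *
          ENNReal.ofReal (8 * Real.exp 1 * √(Fintype.card ι)) ^ Fintype.card ι *
            (∫⁻ x, F x) ^ (Fintype.card ι - 1) := by
  obtain ⟨o, u, s, hdet0, hs, hdet⟩ :=
    hF.exists_mul_lintegral_sq_le_mul_det_sq (c := 9 / 20) hm h0 htop (by norm_num)
  refine ⟨u, hdet0, ?_⟩
  have hprod := hF.prod_enorm_mul_projLIntegral_rpow_mul_le hm hι
    (ne_zero_of_det_rowMatrix_ne_zero hdet0) hs
  set n := Fintype.card ι
  set Z := ∫⁻ x, F x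
  set P := ∏ i, ‖u i‖ₑ * projLIntegral (fun y => F y ^ (1 - (n : ℝ)⁻¹)) (u i)
  have hconst := ofReal_two_pi_exp_pow_mul_pow_le hι
  set A := ENNReal.ofReal ((2 * Real.pi * Real.exp 1) ^ n)
  set E := ENNReal.ofReal (n * Real.exp 1)
  set C := ENNReal.ofReal (8 * Real.exp 1 * √n)
  set q := ENNReal.ofReal (9 / 20)
  set d := ENNReal.ofReal |(rowMatrix u).det|
  have hmain : (P * (q * Z)) ^ 2 * n.factorial ≤
      (d * C ^ n * Z ^ (n - 1) * (q * Z)) ^ 2 * n.factorial :=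
    calc
      _ = P ^ 2 * (n.factorial * (q * Z) ^ 2) := by ring
      _ ≤ P ^ 2 * (A * d ^ 2 * s ^ 2) := by gcongr
      _ = A * d ^ 2 * (P * s) ^ 2 := by ring
      _ ≤ A * d ^ 2 * ((E * Z) ^ n) ^ 2 := by gcongr
      _ = A * E ^ (2 * n) * (d ^ 2 * Z ^ (2 * n)) := by ring
      _ ≤ C ^ (2 * n) * (n.factorial * q ^ 2) * (d ^ 2 * Z ^ (2 * n)) := by gcongr
      _ = (d * C ^ n * (Z ^ (n - 1) * Z) * q) ^ 2 * n.factorial := by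
        rw [pow_sub_one_mul (by omega)]
        ring
      _ = _ := by ring
  rw [ENNReal.mul_le_mul_iff_left (Nat.cast_ne_zero.2 n.factorial_ne_zero)
    (ENNReal.natCast_ne_top _), ENNReal.pow_le_pow_left_iff two_ne_zero,
    ENNReal.mul_le_mul_iff_left (mul_ne_zero (by norm_num [q]) h0)
      (ENNReal.mul_ne_top ENNReal.ofReal_ne_top htop)] at hmain
  exact hmain

end ReverseLoomisWhitney

section Shephard

variable {ι : Type*} [Fintype ι] {f₁ f₂ : EuclideanSpace ℝ ι → ℝ≥0∞}

theorem ELogConcave.exists_prod_enorm_mul_projLIntegral_le [DecidableEq ι] (hf : ELogConcave f₂)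
    (hm : Measurable f₂) (hι : 2 ≤ Fintype.card ι) (h0 : ∫⁻ x, f₂ x ≠ 0)
    (htop : ∫⁻ x, f₂ x ^ ((Fintype.card ι : ℝ) / ((Fintype.card ι : ℝ) - 1)) ≠ ⊤) :
    ∃ u : ι → EuclideanSpace ℝ ι, (rowMatrix u).det ≠ 0 ∧
      ∏ i, ‖u i‖ₑ * projLIntegral f₂ (u i) ≤
        ENNReal.ofReal |(rowMatrix u).det| *
          ENNReal.ofReal (8 * Real.exp 1 * √(Fintype.card ι)) ^ Fintype.card ι *
            (∫⁻ x, f₂ x ^ ((Fintype.card ι : ℝ) / ((Fintype.card ι : ℝ) - 1))) ^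
              (Fintype.card ι - 1) := by
  have hcard : (2 : ℝ) ≤ Fintype.card ι := by exact_mod_cast hι
  have hsub : (0 : ℝ) < (Fintype.card ι : ℝ) - 1 := by linarith
  set p : ℝ := (Fintype.card ι : ℝ) / ((Fintype.card ι : ℝ) - 1) with hp
  have hp0 : 0 < p := div_pos (by linarith) hsub
  have hroot (x : EuclideanSpace ℝ ι) : (f₂ x ^ p) ^ (1 - (Fintype.card ι : ℝ)⁻¹) = f₂ x := by
    have hpr : p * (1 - (Fintype.card ι : ℝ)⁻¹) = 1 := by
      rw [hp]
      field_simp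
    rw [← ENNReal.rpow_mul, hpr, ENNReal.rpow_one]
  simpa only [hroot] using (hf.rpow hp0.le).exists_prod_enorm_mul_projLIntegral_rpow_le
    (hm.pow_const p) hι (mt (lintegral_rpow_eq_zero_iff hm hp0).1 h0) htop

theorem lintegral_rpow_pow_le_of_projLIntegral_le (hι : 2 ≤ Fintype.card ι)
    (hf₁ : UpperSemicontinuous f₁) (hf₂ : ELogConcave f₂) (hm₂ : Measurable f₂)
    (h0 : ∫⁻ x, f₂ x ≠ 0)
    (htop : ∫⁻ x, f₂ x ^ ((Fintype.card ι : ℝ) / ((Fintype.card ι : ℝ) - 1)) ≠ ⊤)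
    (hproj : ∀ θ : EuclideanSpace ℝ ι, ‖θ‖ = 1 → projLIntegral f₁ θ ≤ projLIntegral f₂ θ) :
    (∫⁻ x, f₁ x ^ ((Fintype.card ι : ℝ) / ((Fintype.card ι : ℝ) - 1))) ^ (Fintype.card ι - 1) ≤
      ENNReal.ofReal (8 * Real.exp 1 * √(Fintype.card ι)) ^ Fintype.card ι *
        (∫⁻ x, f₂ x ^ ((Fintype.card ι : ℝ) / ((Fintype.card ι : ℝ) - 1))) ^
          (Fintype.card ι - 1) := by
  classical
  obtain ⟨u, hdet, hu⟩ := hf₂.exists_prod_enorm_mul_projLIntegral_le hm₂ hι h0 htop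
  rw [← ENNReal.mul_le_mul_iff_left (ENNReal.ofReal_pos.2 (abs_pos.2 hdet)).ne'
    ENNReal.ofReal_ne_top]
  calc
    _ ≤ ∏ i, ‖u i‖ₑ * projLIntegral f₁ (u i) := lintegral_rpow_pow_mul_abs_det_le hι hf₁ hdet
    _ ≤ ∏ i, ‖u i‖ₑ * projLIntegral f₂ (u i) := by
      gcongr with i
      exact projLIntegral_le_of_forall_norm_eq_one hproj
        (ne_zero_of_det_rowMatrix_ne_zero hdet i)
    _ ≤ _ := hu.trans_eq (by ring)

theorem functional_shephard_codim_one_lp_general (hι : 2 ≤ Fintype.card ι)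
    (hf₁ : UpperSemicontinuous f₁) (hf₂ : ELogConcave f₂) (hm₂ : Measurable f₂)
    (h0 : ∫⁻ x, f₂ x ≠ 0)
    (hproj : ∀ θ : EuclideanSpace ℝ ι, ‖θ‖ = 1 → projLIntegral f₁ θ ≤ projLIntegral f₂ θ) :
    (∫⁻ x, f₁ x ^ ((Fintype.card ι : ℝ) / ((Fintype.card ι : ℝ) - 1))) ^
        (1 / ((Fintype.card ι : ℝ) / ((Fintype.card ι : ℝ) - 1))) ≤
      ENNReal.ofReal (8 * Real.exp 1 * √(Fintype.card ι)) *
        (∫⁻ x, f₂ x ^ ((Fintype.card ι : ℝ) / ((Fintype.card ι : ℝ) - 1))) ^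
          (1 / ((Fintype.card ι : ℝ) / ((Fintype.card ι : ℝ) - 1))) := by
  set n := Fintype.card ι
  have hn : (2 : ℝ) ≤ n := by exact_mod_cast hι
  set p : ℝ := (n : ℝ) / ((n : ℝ) - 1) with hp
  set C := ENNReal.ofReal (8 * Real.exp 1 * √n)
  rcases eq_or_ne (∫⁻ x, f₂ x ^ p) ⊤ with htop | htop
  · have hC : C ≠ 0 := (ENNReal.ofReal_pos.2 (by positivity)).ne'
    have hp0 : 0 < p := div_pos (by linarith) (by linarith)
    rw [htop, ENNReal.top_rpow_of_pos (one_div_pos.2 hp0), ENNReal.mul_top hC]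
    exact le_top
  have hroot (a : ℝ≥0∞) : a ^ (1 / p) = (a ^ (n - 1)) ^ (n : ℝ)⁻¹ := by
    rw [← ENNReal.rpow_natCast_mul, Nat.cast_pred (by omega), hp, one_div_div, div_eq_mul_inv]
  rw [hroot, hroot, ← ENNReal.pow_rpow_inv_natCast (n := n) (by omega) C,
    ← ENNReal.mul_rpow_of_nonneg _ _ (by positivity)]
  exact ENNReal.rpow_le_rpow
    (lintegral_rpow_pow_le_of_projLIntegral_le hι hf₁ hf₂ hm₂ h0 htop hproj) (by positivity)

end Shephard

section QZero

variable {n : ℕ} {f : Eucl n → ℝ}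

namespace MemQ0

theorem upperSemicontinuous_ofReal (hf : MemQ0 f) :
    UpperSemicontinuous fun x => ENNReal.ofReal (f x) :=
  ENNReal.continuous_ofReal.comp_upperSemicontinuous hf.2.2.1 ENNReal.ofReal_mono

theorem eLogConcave_ofReal (hf : MemQ0 f) : ELogConcave fun x => ENNReal.ofReal (f x) := by
  intro x y t ht0 ht1
  have ht : 0 ≤ 1 - t := sub_nonneg.2 ht1.le
  rw [ENNReal.ofReal_rpow_of_nonneg (hf.1 x) ht0.le, ENNReal.ofReal_rpow_of_nonneg (hf.1 y) ht,
    ← ENNReal.ofReal_mul (Real.rpow_nonneg (hf.1 x) t)]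
  exact ENNReal.ofReal_le_ofReal (hf.2.1 x y t ht0 ht1)

theorem lintegral_ofReal_ne_zero (hf : MemQ0 f) : ∫⁻ x, ENNReal.ofReal (f x) ≠ 0 := by
  obtain ⟨hnonneg, -, -, hint, hpos⟩ := hf
  rw [← ofReal_integral_eq_lintegral_ofReal hint (ae_of_all _ hnonneg)]
  exact (ENNReal.ofReal_pos.2 hpos).ne'

theorem lintegral_ofReal_ne_top (hf : MemQ0 f) : ∫⁻ x, ENNReal.ofReal (f x) ≠ ⊤ :=
  hf.2.2.2.1.lintegral_lt_top.ne

theorem lpNorm_nonneg (hf : MemQ0 f) (p : ℝ) : 0 ≤ _root_.lpNorm p f :=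
  Real.rpow_nonneg (integral_nonneg fun x => Real.rpow_nonneg (hf.1 x) p) _

theorem ofReal_lpNorm (hf : MemQ0 f) {p : ℝ} (hp : 1 ≤ p) :
    ENNReal.ofReal (_root_.lpNorm p f) = (∫⁻ x, ENNReal.ofReal (f x) ^ p) ^ (1 / p) := by
  have hp0 : 0 ≤ p := zero_le_one.trans hp
  have hm : Measurable fun x => ENNReal.ofReal (f x) := hf.upperSemicontinuous_ofReal.measurable
  have hfin := hf.eLogConcave_ofReal.lintegral_rpow_ne_top hm hf.lintegral_ofReal_ne_zero
    hf.lintegral_ofReal_ne_top hp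
  have hint : ∫ x, f x ^ p = (∫⁻ x, ENNReal.ofReal (f x) ^ p).toReal := by
    simp only [ENNReal.ofReal_rpow_of_nonneg (hf.1 _) hp0]
    exact integral_eq_lintegral_of_nonneg_ae (ae_of_all _ fun x => Real.rpow_nonneg (hf.1 x) p)
      (hf.2.2.1.measurable.pow_const p).aestronglyMeasurable
  rw [_root_.lpNorm, hint, ENNReal.toReal_rpow, ENNReal.ofReal_toReal]
  exact ENNReal.rpow_ne_top_of_nonneg (by positivity) hfin

theorem toReal_lineSup (hf : MemQ0 f) (u x : Eucl n) :
    (lineSup (fun y => ENNReal.ofReal (f y)) u x).toReal =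
      ⨆ z : (ℝ ∙ u)ᗮᗮ, f (x + z) := by
  have hsurj : Function.Surjective fun s : ℝ =>
      (⟨s • u, (ℝ ∙ u).le_orthogonal_orthogonal (Submodule.mem_span_singleton.2 ⟨s, rfl⟩)⟩ :
        (ℝ ∙ u)ᗮᗮ) := by
    rintro ⟨z, hz⟩
    rw [Submodule.orthogonal_orthogonal] at hz
    obtain ⟨s, rfl⟩ := Submodule.mem_span_singleton.1 hz
    exact ⟨s, rfl⟩
  rw [lineSup, ENNReal.toReal_iSup fun _ => ENNReal.ofReal_ne_top,
    ← hsurj.iSup_comp fun z : (ℝ ∙ u)ᗮᗮ => f (x + z)]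
  simp only [ENNReal.toReal_ofReal (hf.1 _)]

theorem projLIntegral_ofReal (hf : MemQ0 f) {u : Eucl n} (hu : u ≠ 0) :
    projLIntegral (fun x => ENNReal.ofReal (f x)) u = ENNReal.ofReal (projL1 f (ℝ ∙ u)ᗮ) := by
  set F : Eucl n → ℝ≥0∞ := fun x => ENNReal.ofReal (f x)
  have hm : Measurable F := hf.upperSemicontinuous_ofReal.measurable
  have hF0 := hf.lintegral_ofReal_ne_zero
  have hFtop := hf.lintegral_ofReal_ne_top
  obtain ⟨B, hB, hFB⟩ := hf.eLogConcave_ofReal.exists_le_of_lintegral_ne_top hm hF0 hFtop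
  have hsup (y : (ℝ ∙ u)ᗮ) : lineSup F u y < ⊤ :=
    (iSup_le fun _ => hFB _).trans_lt hB.lt_top
  have hsup_meas : Measurable fun y : (ℝ ∙ u)ᗮ => lineSup F u y :=
    (measurable_lineSup hf.upperSemicontinuous_ofReal u).comp measurable_subtype_coe
  have hproj : projL1 f (ℝ ∙ u)ᗮ = (projLIntegral F u).toReal := by
    simp only [projL1, projLIntegral, ← hf.toReal_lineSup]
    exact integral_toReal hsup_meas.aemeasurable (ae_of_all _ hsup)
  rw [hproj, ENNReal.ofReal_toReal]
  exact hf.eLogConcave_ofReal.projLIntegral_ne_top hm hF0 hFtop hu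

end MemQ0

end QZero

/-- **Functional Shephard problem of codimension one**, `L^{n/(n-1)}`-form
(Corollary 3.2, first bound). -/
theorem functional_shephard_codim_one_lp (n : ℕ) (hn : 2 ≤ n)
    (f₁ f₂ : Eucl n → ℝ) (hf₁ : MemQ0 f₁) (hf₂ : MemQ0 f₂)
    (hcond : ∀ θ : Eucl n, ‖θ‖ = 1 →
      projL1 f₁ (Submodule.span ℝ {θ})ᗮ ≤ projL1 f₂ (Submodule.span ℝ {θ})ᗮ) :
    lpNorm ((n : ℝ) / ((n : ℝ) - 1)) f₁ ≤
      8 * Real.exp 1 * Real.sqrt n * lpNorm ((n : ℝ) / ((n : ℝ) - 1)) f₂ := by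
  have hp : 1 ≤ (n : ℝ) / ((n : ℝ) - 1) := by
    have hn' : (2 : ℝ) ≤ n := by exact_mod_cast hn
    rw [le_div_iff₀] <;> linarith
  have hproj (θ : Eucl n) (hθ : ‖θ‖ = 1) : projLIntegral (fun x => ENNReal.ofReal (f₁ x)) θ ≤
      projLIntegral (fun x => ENNReal.ofReal (f₂ x)) θ := by
    have hθ0 : θ ≠ 0 := norm_ne_zero_iff.1 (hθ ▸ one_ne_zero)
    rw [hf₁.projLIntegral_ofReal hθ0, hf₂.projLIntegral_ofReal hθ0]
    exact ENNReal.ofReal_le_ofReal (hcond θ hθ)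
  have h := functional_shephard_codim_one_lp_general (by rwa [Fintype.card_fin])
    hf₁.upperSemicontinuous_ofReal hf₂.eLogConcave_ofReal
    hf₂.upperSemicontinuous_ofReal.measurable hf₂.lintegral_ofReal_ne_zero hproj
  rw [Fintype.card_fin, ← hf₁.ofReal_lpNorm hp, ← hf₂.ofReal_lpNorm hp,
    ← ENNReal.ofReal_mul (by positivity)] at h
  exact (ENNReal.ofReal_le_ofReal_iff (mul_nonneg (by positivity) (hf₂.lpNorm_nonneg _))).1 h
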